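/- Let (Ω, 𝒜, μ) be a measure space, p ∈ [1,∞), T a positive C₀-semigroup on L_p(μ) with generator A, and V : Ω → [0,∞] locally measurable. Let P := s-lim_{t→0+} T_V(t), a band projection, with range L_p(μ₁) for a decomposition μ = μ₁ + μ₂, μ₁ ⊥ μ₂. Then −V is admissible for the restricted C₀-semigroup T_V|_{L_p(μ₁)}; this relies on the domination T_{V∧m − V∧n}(t) ≤ T(t) for all m ≥ n ≥ 0 and t ≥ 0. -/

import Mathlib

open MeasureTheory Filter Topology ENNReal

noncomputable section

namespace Absorption

variable {E : Type*} [NormedAddCommGroup E] [NormedSpace ℝ E]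

/-- A one-parameter semigroup of bounded operators (for nonnegative times). -/
def IsSemigroup (T : ℝ → E →L[ℝ] E) : Prop :=
  T 0 = ContinuousLinearMap.id ℝ E ∧
    ∀ s t : ℝ, 0 ≤ s → 0 ≤ t → T (s + t) = (T s).comp (T t)

/-- A `C₀`-semigroup: a one-parameter semigroup which is strongly continuous on `[0, ∞)`. -/
def IsC0Semigroup (T : ℝ → E →L[ℝ] E) : Prop :=
  IsSemigroup T ∧ ∀ f : E, ContinuousOn (fun t => T t f) (Set.Ici (0 : ℝ))

/-- `(f, g)` belongs to the graph of the generator of the semigroup `T`. -/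
def InGenerator (T : ℝ → E →L[ℝ] E) (f g : E) : Prop :=
  Tendsto (fun t : ℝ => t⁻¹ • (T t f - f)) (𝓝[>] (0 : ℝ)) (𝓝 g)

variable {Ω : Type*} [MeasurableSpace Ω]

/-- A function into a measurable space is *locally measurable* (w.r.t. `μ`) if on every set of
finite measure it coincides a.e. with a measurable function. -/
def LocallyMeasurable {α : Type*} [MeasurableSpace α] (μ : Measure Ω) (V : Ω → α) : Prop :=
  ∀ B : Set Ω, MeasurableSet B → μ B < ∞ →
    ∃ g : Ω → α, Measurable g ∧ ∀ᵐ ω ∂(μ.restrict B), V ω = g ω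

/-- A set is a local `μ`-null set if its intersection with every measurable set of finite
measure is null. -/
def IsLocalNullSet (μ : Measure Ω) (N : Set Ω) : Prop :=
  ∀ B : Set Ω, MeasurableSet B → μ B < ∞ → μ (N ∩ B) = 0

/-- Positivity of a family of operators on `L_p` (for positive times). -/
def IsPositiveSG {p : ℝ≥0∞} {μ : Measure Ω} [Fact (1 ≤ p)]
    (T : ℝ → Lp ℝ p μ →L[ℝ] Lp ℝ p μ) : Prop :=
  ∀ t : ℝ, 0 ≤ t → ∀ f : Lp ℝ p μ, 0 ≤ f → 0 ≤ T t f

/-- A band projection on the Banach lattice `L_p(μ)`: an idempotent operator `P`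
with `0 ≤ P f ≤ f` for all `f ≥ 0`. -/
def IsBandProjection {p : ℝ≥0∞} {μ : Measure Ω} [Fact (1 ≤ p)]
    (P : Lp ℝ p μ →L[ℝ] Lp ℝ p μ) : Prop :=
  P.comp P = P ∧ ∀ f : Lp ℝ p μ, 0 ≤ f → 0 ≤ P f ∧ P f ≤ f

/-- `S = (e^{t(A−W)})_{t ≥ 0}`: `S` is the `C₀`-semigroup whose generator is `A - W`,
where `A` is the generator of `T` and the bounded function `W` acts by multiplication. -/
def IsPerturbedSG (μ : Measure Ω) (p : ℝ≥0∞) [Fact (1 ≤ p)]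
    (T S : ℝ → Lp ℝ p μ →L[ℝ] Lp ℝ p μ) (W : Ω → ℝ) : Prop :=
  IsC0Semigroup S ∧
    ∀ f g : Lp ℝ p μ, InGenerator S f g ↔
      ∃ g₀ : Lp ℝ p μ, InGenerator T f g₀ ∧
        ⇑g =ᵐ[μ] fun ω => g₀ ω - W ω * f ω

/-- Same as `IsPerturbedSG`, for semigroups acting on a subspace `F` of `L_p(μ)`. -/
def IsPerturbedSGSub (μ : Measure Ω) (p : ℝ≥0∞) [Fact (1 ≤ p)] (F : Submodule ℝ (Lp ℝ p μ))
    (T S : ℝ → F →L[ℝ] F) (W : Ω → ℝ) : Prop :=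
  IsC0Semigroup S ∧
    ∀ f g : F, InGenerator S f g ↔
      ∃ g₀ : F, InGenerator T f g₀ ∧
        ⇑(g : Lp ℝ p μ) =ᵐ[μ] fun ω => (g₀ : Lp ℝ p μ) ω - W ω * (f : Lp ℝ p μ) ω

/-- The truncation `V ∧ n` of `V : Ω → [0,∞]`, as a real-valued function. -/
def trunc (V : Ω → ℝ≥0∞) (n : ℕ) : Ω → ℝ := fun ω => (min (V ω) (n : ℝ≥0∞)).toReal

/-- The scalar multiple `ε V` of an absorption rate `V : Ω → [0,∞]`. -/
def smulRate (ε : ℝ) (V : Ω → ℝ≥0∞) : Ω → ℝ≥0∞ := fun ω => ENNReal.ofReal ε * V ω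

/-- The absorption rate `V - V ∧ n` (with value `∞` wherever `V = ∞`). -/
def resid (V : Ω → ℝ≥0∞) (n : ℕ) : Ω → ℝ≥0∞ := fun ω => V ω - min (V ω) (n : ℝ≥0∞)

/-- `TV` is the absorption semigroup `T_V` associated with the rate `V : Ω → [0,∞]`, i.e.
the strong limit `T_V(t) = s-lim_{n→∞} e^{t(A - V∧n)}` (for `t ≥ 0`). -/
def IsAbsorptionSG (μ : Measure Ω) (p : ℝ≥0∞) [Fact (1 ≤ p)]
    (T : ℝ → Lp ℝ p μ →L[ℝ] Lp ℝ p μ) (V : Ω → ℝ≥0∞)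
    (TV : ℝ → Lp ℝ p μ →L[ℝ] Lp ℝ p μ) : Prop :=
  ∃ S : ℕ → ℝ → Lp ℝ p μ →L[ℝ] Lp ℝ p μ,
    (∀ n, IsPerturbedSG μ p T (S n) (trunc V n)) ∧
    ∀ t : ℝ, 0 ≤ t → ∀ f, Tendsto (fun n => S n t f) atTop (𝓝 (TV t f))

/-- `V : Ω → [0,∞]` is `T`-admissible: `V` is locally measurable, the strong limits
`T_V(t) = s-lim_{n→∞} e^{t(A - V∧n)}` exist, and `T_V` is a `C₀`-semigroup. -/
def Admissible (μ : Measure Ω) (p : ℝ≥0∞) [Fact (1 ≤ p)]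
    (T : ℝ → Lp ℝ p μ →L[ℝ] Lp ℝ p μ) (V : Ω → ℝ≥0∞) : Prop :=
  LocallyMeasurable μ V ∧
  ∃ TV, IsAbsorptionSG μ p T V TV ∧ IsC0Semigroup TV

/-- The truncation `(V ∧ n) ∨ (−n)` of an extended-real-valued rate, as a real function. -/
def truncE (V : Ω → EReal) (n : ℕ) : Ω → ℝ :=
  fun ω => (max (min (V ω) (n : EReal)) (-(n : EReal))).toReal

/-- `TV` is the absorption semigroup `T_V` of an extended-real-valued rate `V`:
`T_V(t) = s-lim_{n→∞} e^{t(A - (V∧n)∨(−n))}` (for `t ≥ 0`). -/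
def IsAbsorptionSGE (μ : Measure Ω) (p : ℝ≥0∞) [Fact (1 ≤ p)]
    (T : ℝ → Lp ℝ p μ →L[ℝ] Lp ℝ p μ) (V : Ω → EReal)
    (TV : ℝ → Lp ℝ p μ →L[ℝ] Lp ℝ p μ) : Prop :=
  ∃ S : ℕ → ℝ → Lp ℝ p μ →L[ℝ] Lp ℝ p μ,
    (∀ n, IsPerturbedSG μ p T (S n) (truncE V n)) ∧
    ∀ t : ℝ, 0 ≤ t → ∀ f, Tendsto (fun n => S n t f) atTop (𝓝 (TV t f))

/-- `T`-admissibility for an extended-real-valued absorption rate `V`. -/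
def AdmissibleE (μ : Measure Ω) (p : ℝ≥0∞) [Fact (1 ≤ p)]
    (T : ℝ → Lp ℝ p μ →L[ℝ] Lp ℝ p μ) (V : Ω → EReal) : Prop :=
  LocallyMeasurable μ V ∧
  ∃ TV, IsAbsorptionSGE μ p T V TV ∧ IsC0Semigroup TV

end Absorption

open Absorption

/-!
Fix `n` and let `D m n`, for `m ≥ n`, be the semigroup generated by `A - (V ∧ m - V ∧ n)`. Each of
the perturbations is bounded, so all semigroups are Dyson–Phillips series, and adding a multiple of
the identity to make the perturbing operator positive yields `0 ≤ D m n t ≤ T t`. Since `D m n` is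
also the perturbation of `e^{t(A - V ∧ m)}` by `V ∧ n`, its series converges termwise on the closed
ideal `F` as `m → ∞`; the limit is the perturbation of `T_V|_F` by `V ∧ n`, which inherits the
domination by `T`. These limits increase with `n`, so they converge because the norm is order
continuous, and strong continuity of the limit at `0` follows by squeezing it between `T_V` and `T`.
-/

namespace Absorption

section Semigroup

variable {E : Type*} [NormedAddCommGroup E] [NormedSpace ℝ E] {T S : ℝ → E →L[ℝ] E}
  {B : E →L[ℝ] E} {f g : E} {u v : ℝ → E} {s t τ M : ℝ}

theorem IsSemigroup.zero_apply (hT : IsSemigroup T) (f : E) : T 0 f = f := by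
  rw [hT.1, ContinuousLinearMap.id_apply]

theorem IsSemigroup.add_apply (hT : IsSemigroup T) (hs : 0 ≤ s) (ht : 0 ≤ t) (f : E) :
    T (s + t) f = T s (T t f) := by
  rw [hT.2 s t hs ht, ContinuousLinearMap.comp_apply]

theorem IsC0Semigroup.tendsto_zero (hT : IsC0Semigroup T) (f : E) :
    Tendsto (fun t => T t f) (𝓝[≥] 0) (𝓝 f) := by
  simpa only [ContinuousWithinAt, hT.1.zero_apply] using hT.2 f 0 Set.self_mem_Ici

theorem InGenerator.apply (hT : IsSemigroup T) (h : InGenerator T f g) (hs : 0 ≤ s) :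
    InGenerator T (T s f) (T s g) := by
  refine (((T s).continuous.tendsto g).comp h).congr' ?_
  filter_upwards [self_mem_nhdsWithin] with t (ht : 0 < t)
  rw [Function.comp_apply, map_smul, map_sub, ← hT.add_apply hs ht.le, add_comm s t,
    hT.add_apply ht.le hs]

theorem hasDerivWithinAt_Ici_of_tendsto_slope {φ : ℝ → E} {φ' : E}
    (h : Tendsto (fun r : ℝ => r⁻¹ • (φ (s + r) - φ s)) (𝓝[>] 0) (𝓝 φ')) :
    HasDerivWithinAt φ φ' (Set.Ici s) s := by
  rw [← hasDerivWithinAt_Ioi_iff_Ici, hasDerivWithinAt_iff_tendsto_slope' (Set.self_notMem_Ioi)]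
  have hshift : Tendsto (fun y : ℝ => y - s) (𝓝[>] s) (𝓝[>] 0) := by
    refine tendsto_nhdsWithin_iff.2 ⟨?_, ?_⟩
    · exact ((continuous_sub_right s).tendsto' s 0 (sub_self s)).mono_left nhdsWithin_le_nhds
    · filter_upwards [self_mem_nhdsWithin] with y hy using sub_pos.2 (Set.mem_Ioi.1 hy)
  refine (h.comp hshift).congr fun y => ?_
  rw [Function.comp_apply, add_sub_cancel, slope_def_module]

theorem isClosed_range_of_comp_self {P : E →L[ℝ] E} (hP : P.comp P = P) :
    IsClosed (Set.range P) := by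
  have hfix : Set.range P = {f | P f = f} :=
    Set.Subset.antisymm (Set.range_subset_iff.2 fun f => DFunLike.congr_fun hP f)
      fun f hf => ⟨f, hf⟩
  rw [hfix]
  exact isClosed_eq P.continuous continuous_id

section Complete

variable [CompleteSpace E]

theorem IsC0Semigroup.exists_norm_le (hT : IsC0Semigroup T) (τ : ℝ) :
    ∃ M, ∀ t ∈ Set.Icc 0 τ, ‖T t‖ ≤ M := by
  obtain ⟨M, hM⟩ := banach_steinhaus (g := fun t : Set.Icc (0 : ℝ) τ => T t) fun f => by
    obtain ⟨C, hC⟩ := isCompact_Icc.exists_bound_of_continuousOn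
      ((hT.2 f).mono (Set.Icc_subset_Ici_self : Set.Icc 0 τ ⊆ _))
    exact ⟨C, fun t => hC t t.2⟩
  exact ⟨M, fun t ht => hM ⟨t, ht⟩⟩

theorem IsC0Semigroup.continuous_clamp {X : Type*} [TopologicalSpace X] (hT : IsC0Semigroup T)
    {φ : X → ℝ} {ψ : X → E} (hφ : Continuous φ) (hψ : Continuous ψ) :
    Continuous fun x => T (max (φ x) 0) (ψ x) := by
  refine continuous_iff_continuousAt.2 fun x₀ => ?_
  obtain ⟨M, hM⟩ := hT.exists_norm_le (max (φ x₀) 0 + 1)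
  have hm : Continuous fun x => max (φ x) 0 := hφ.max continuous_const
  have hfix : Continuous fun x => T (max (φ x) 0) (ψ x₀) :=
    (hT.2 (ψ x₀)).comp_continuous hm fun _ => Set.mem_Ici.2 (le_max_right _ _)
  have hbound : Tendsto (fun x => M * ‖ψ x - ψ x₀‖) (𝓝 x₀) (𝓝 0) := by
    have h : Continuous fun x => M * ‖ψ x - ψ x₀‖ := by fun_prop
    simpa using h.tendsto x₀
  have hdiff : Tendsto (fun x => T (max (φ x) 0) (ψ x - ψ x₀)) (𝓝 x₀) (𝓝 0) := by
    refine squeeze_zero_norm' ?_ hbound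
    filter_upwards [hm.continuousAt.eventually (gt_mem_nhds (lt_add_one _))] with x hx
    exact (T _).le_of_opNorm_le (hM _ ⟨le_max_right _ _, hx.le⟩) _
  simpa [ContinuousAt] using hdiff.add (hfix.tendsto x₀)

end Complete

/-- The convolution `∫₀ᵗ T(t - r) g(r) dr`. Clamping the time at `0` changes nothing for `0 ≤ t`
and makes the integrand jointly continuous on all of `ℝ × ℝ`. -/
def duhamel (T : ℝ → E →L[ℝ] E) (g : ℝ → E) (t : ℝ) : E :=
  ∫ r in (0 : ℝ)..t, T (max (t - r) 0) (g r)

theorem norm_duhamel_le {C : ℝ} {n : ℕ} (hM : ∀ t ∈ Set.Icc 0 τ, ‖T t‖ ≤ M)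
    (hu : ∀ r ∈ Set.Icc 0 τ, ‖u r‖ ≤ C * (r ^ n / n.factorial)) (ht : t ∈ Set.Icc 0 τ) :
    ‖duhamel T u t‖ ≤ M * C * (t ^ (n + 1) / (n + 1).factorial) := by
  have hint : ∫ r in (0 : ℝ)..t, M * (C * (r ^ n / n.factorial))
      = M * C * (t ^ (n + 1) / (n + 1).factorial) := by
    simp only [intervalIntegral.integral_const_mul, intervalIntegral.integral_div, integral_pow,
      Nat.factorial_succ, Nat.cast_mul, Nat.cast_succ, zero_pow n.succ_ne_zero, sub_zero]
    rw [div_div, mul_assoc M C]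
  rw [← hint]
  refine intervalIntegral.norm_integral_le_of_norm_le ht.1 (ae_of_all _ fun r hr => ?_)
    (Continuous.intervalIntegrable (by fun_prop) _ _)
  have hr' : max (t - r) 0 ∈ Set.Icc 0 τ :=
    ⟨le_max_right _ _, max_le (by linarith [hr.1, ht.2]) (ht.1.trans ht.2)⟩
  exact (T _).le_of_opNorm_le_of_le (hM _ hr') (hu r ⟨hr.1.le, hr.2.trans ht.2⟩)

theorem duhamel_smul (c : ℝ) (u : ℝ → E) (t : ℝ) :
    duhamel T (fun r => c • u r) t = c • duhamel T u t := by
  simp only [duhamel, map_smul, intervalIntegral.integral_smul]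

section Duhamel

variable [CompleteSpace E]

theorem IsC0Semigroup.intervalIntegrable_duhamel (hT : IsC0Semigroup T) (hu : Continuous u)
    (t a b : ℝ) : IntervalIntegrable (fun r => T (max (t - r) 0) (u r)) volume a b :=
  (hT.continuous_clamp (by fun_prop) hu).intervalIntegrable _ _

theorem IsC0Semigroup.continuous_duhamel (hT : IsC0Semigroup T) (hu : Continuous u) :
    Continuous (duhamel T u) :=
  intervalIntegral.continuous_parametric_intervalIntegral_of_continuous
    (hT.continuous_clamp (φ := fun x : ℝ × ℝ => x.1 - x.2) (by fun_prop)
      (hu.comp continuous_snd)) continuous_id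

theorem IsC0Semigroup.duhamel_add (hT : IsC0Semigroup T) (hu : Continuous u)
    (hv : Continuous v) (t : ℝ) :
    duhamel T (fun r => u r + v r) t = duhamel T u t + duhamel T v t := by
  simp only [duhamel, map_add]
  exact intervalIntegral.integral_add (hT.intervalIntegrable_duhamel hu _ _ _)
    (hT.intervalIntegrable_duhamel hv _ _ _)

theorem IsC0Semigroup.duhamel_time_add (hT : IsC0Semigroup T) (hu : Continuous u)
    (hs : 0 ≤ s) (ht : 0 ≤ t) :
    duhamel T u (s + t) = T t (duhamel T u s) + duhamel T (fun r => u (r + s)) t := by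
  have hi := hT.intervalIntegrable_duhamel hu (s + t)
  rw [duhamel, ← intervalIntegral.integral_add_adjacent_intervals (hi 0 s) (hi s (s + t))]
  congr 1
  · rw [duhamel, ← ContinuousLinearMap.intervalIntegral_comp_comm _
      (hT.intervalIntegrable_duhamel hu _ _ _)]
    refine intervalIntegral.integral_congr fun r hr => ?_
    rw [Set.uIcc_of_le hs] at hr
    have hsr : 0 ≤ s - r := sub_nonneg.2 hr.2
    simp only [max_eq_left hsr, ← hT.1.add_apply ht hsr]
    rw [max_eq_left (by linarith), add_sub_right_comm, add_comm]
  · have hshift := intervalIntegral.integral_comp_add_right (a := 0) (b := t)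
      (fun r => T (max (s + t - r) 0) (u r)) s
    rw [zero_add, add_comm t s] at hshift
    simp only [← hshift, duhamel, add_comm _ s, add_sub_add_left_eq_sub]

theorem IsC0Semigroup.tendsto_inv_smul_duhamel (hT : IsC0Semigroup T) (hu : Continuous u) :
    Tendsto (fun t : ℝ => t⁻¹ • duhamel T u t) (𝓝[>] 0) (𝓝 (u 0)) := by
  have hcont : Continuous fun t : ℝ =>
      ∫ x in (0 : ℝ)..1, T (max (t - t * x) 0) (u (t * x)) :=
    intervalIntegral.continuous_parametric_intervalIntegral_of_continuous'
      (hT.continuous_clamp (φ := fun x : ℝ × ℝ => x.1 - x.1 * x.2) (by fun_prop)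
        (hu.comp (by fun_prop))) 0 1
  have hlim := hcont.tendsto 0
  simp only [zero_mul, sub_zero, max_self, hT.1.zero_apply, intervalIntegral.integral_const,
    one_smul] at hlim
  refine (hlim.mono_left nhdsWithin_le_nhds).congr' ?_
  filter_upwards [self_mem_nhdsWithin] with t (ht : 0 < t)
  have hsubst := intervalIntegral.smul_integral_comp_mul_left (a := 0) (b := 1)
    (fun r => T (max (t - r) 0) (u r)) t
  rw [mul_zero, mul_one] at hsubst
  rw [duhamel, ← hsubst, inv_smul_smul₀ ht.ne']

theorem IsC0Semigroup.dense_generator_domain (hT : IsC0Semigroup T) :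
    Dense {f : E | ∃ g, InGenerator T f g} := by
  intro f
  set J : ℝ → E := duhamel T fun _ => f
  have hJ : Tendsto (fun t : ℝ => t⁻¹ • J t) (𝓝[>] 0) (𝓝 f) :=
    hT.tendsto_inv_smul_duhamel continuous_const
  refine mem_closure_of_tendsto hJ ?_
  filter_upwards [self_mem_nhdsWithin] with h (hh : 0 < h)
  suffices hgen : InGenerator T (J h) (T h f - f) from
    ⟨h⁻¹ • (T h f - f), by
      simpa only [InGenerator, map_smul, ← smul_sub, smul_comm h⁻¹] using hgen.const_smul h⁻¹⟩
  refine ((((T h).continuous.tendsto f).comp hJ).sub hJ).congr' ?_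
  filter_upwards [self_mem_nhdsWithin] with r (hr : 0 < r)
  have hcomm : T h (J r) + J h = T r (J h) + J r := by
    rw [← hT.duhamel_time_add continuous_const hr.le hh.le,
      ← hT.duhamel_time_add continuous_const hh.le hr.le, add_comm]
  rw [Function.comp_apply, map_smul, ← smul_sub, sub_eq_sub_iff_add_eq_add.2 hcomm]

theorem IsC0Semigroup.tendsto_slope_comp (hT : IsC0Semigroup T) (hS : IsC0Semigroup S)
    (hext : ∀ f g, InGenerator S f g → InGenerator T f g) (hf : InGenerator S f g)
    (hs : s ∈ Set.Ico 0 t) :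
    Tendsto (fun r : ℝ => r⁻¹ • (T (t - (s + r)) (S (s + r) f) - T (t - s) (S s f)))
      (𝓝[>] 0) (𝓝 0) := by
  obtain ⟨M, hM⟩ := hT.exists_norm_le t
  set k := S s f
  have hgen : InGenerator S k (S s g) := hf.apply hS.1 hs.1
  have hdiff : Tendsto (fun r : ℝ => M * ‖r⁻¹ • (S r k - k) - r⁻¹ • (T r k - k)‖)
      (𝓝[>] 0) (𝓝 0) := by
    simpa only [sub_self, norm_zero, mul_zero] using
      ((hgen.sub (hext _ _ hgen)).norm).const_mul M
  refine squeeze_zero_norm' ?_ hdiff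
  filter_upwards [Ioo_mem_nhdsGT (sub_pos.2 hs.2)] with r hr
  have hrest : 0 ≤ t - (s + r) := by linarith [hr.2]
  have hTk : T (t - s) k = T (t - (s + r)) (T r k) := by
    rw [← hT.1.add_apply hrest hr.1.le, ← sub_sub, sub_add_cancel]
  rw [hTk, add_comm s r, hS.1.add_apply hr.1.le hs.1, add_comm r s, ← map_sub, ← map_smul,
    ← smul_sub, sub_sub_sub_cancel_right]
  exact (T _).le_of_opNorm_le (hM _ ⟨hrest, by linarith [hs.1, hr.1]⟩) _

theorem IsC0Semigroup.eq_of_inGenerator_imp (hT : IsC0Semigroup T) (hS : IsC0Semigroup S)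
    (hext : ∀ f g, InGenerator S f g → InGenerator T f g) (ht : 0 ≤ t) : S t = T t := by
  refine ContinuousLinearMap.ext_on (hS.dense_generator_domain.mono Submodule.subset_span) ?_
  rintro f ⟨g, hf⟩
  have hcont : ContinuousOn (fun s => T (t - s) (S s f)) (Set.Icc 0 t) := by
    refine (hT.continuous_clamp (φ := fun s => t - s) (by fun_prop)
      (hS.continuous_clamp continuous_id (continuous_const (y := f)))).continuousOn.congr ?_
    intro s hs
    simp only [id_eq, max_eq_left (sub_nonneg.2 hs.2), max_eq_left hs.1]
  have hconst := constant_of_has_deriv_right_zero hcont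
    (fun s hs => hasDerivWithinAt_Ici_of_tendsto_slope (hT.tendsto_slope_comp hS hext hf hs))
    t ⟨ht, le_rfl⟩
  simpa only [sub_self, sub_zero, hT.1.zero_apply, hS.1.zero_apply] using hconst

/-- `u` is a mild solution of `u' = (A + B) u`, `u(0) = f`, where `A` is the generator of `T`.
For the sake of integrability `u` is continuous on all of `ℝ`; its values at negative times are
irrelevant. -/
structure IsMildSolution (T : ℝ → E →L[ℝ] E) (B : E →L[ℝ] E) (f : E) (u : ℝ → E) : Prop where
  continuous : Continuous u
  eq_add : ∀ t, 0 ≤ t → u t = T t f + duhamel T (fun r => B (u r)) t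

omit [CompleteSpace E] in
theorem IsMildSolution.continuous_map (hu : IsMildSolution T B f u) :
    Continuous fun r => B (u r) :=
  B.continuous.comp hu.continuous

theorem IsMildSolution.add (hT : IsC0Semigroup T) (hu : IsMildSolution T B f u)
    (hv : IsMildSolution T B g v) : IsMildSolution T B (f + g) fun t => u t + v t := by
  refine ⟨hu.continuous.add hv.continuous, fun t ht => ?_⟩
  simp only [map_add]
  rw [hT.duhamel_add hu.continuous_map hv.continuous_map,
    hu.eq_add t ht, hv.eq_add t ht, add_add_add_comm]

omit [CompleteSpace E] in
theorem IsMildSolution.smul (c : ℝ) (hu : IsMildSolution T B f u) :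
    IsMildSolution T B (c • f) fun t => c • u t := by
  refine ⟨hu.continuous.const_smul c, fun t ht => ?_⟩
  simp only [map_smul]
  rw [duhamel_smul, hu.eq_add t ht, smul_add]

theorem IsMildSolution.shift (hT : IsC0Semigroup T) (hu : IsMildSolution T B f u) (hs : 0 ≤ s) :
    IsMildSolution T B (u s) fun t => u (t + s) := by
  refine ⟨hu.continuous.comp (continuous_add_const s), fun t ht => ?_⟩
  rw [add_comm t s, hu.eq_add _ (add_nonneg hs ht),
    hT.duhamel_time_add hu.continuous_map hs ht, hu.eq_add s hs, map_add,
    ← hT.1.add_apply ht hs, add_comm s t, add_assoc]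

/-- The iterated norm estimate leaves `‖u(t) - v(t)‖ ≤ C (M ‖B‖ t)ⁿ / n!` for all `n`. -/
theorem IsMildSolution.unique (hT : IsC0Semigroup T) (hu : IsMildSolution T B f u)
    (hv : IsMildSolution T B f v) (ht : 0 ≤ t) : u t = v t := by
  obtain ⟨M, hM⟩ := hT.exists_norm_le t
  have hdiff : ∀ s, 0 ≤ s → u s - v s = duhamel T (fun r => B (u r - v r)) s := fun s hs => by
    have hsplit := hT.duhamel_add (hu.continuous_map.fun_sub hv.continuous_map) hv.continuous_map s
    simp only [sub_add_cancel] at hsplit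
    simp only [map_sub, hu.eq_add s hs, hv.eq_add s hs, hsplit, add_sub_add_left_eq_sub,
      add_sub_cancel_right]
  obtain ⟨C, hC⟩ := (isCompact_Icc (a := 0) (b := t)).exists_bound_of_continuousOn
    (hu.continuous.sub hv.continuous).continuousOn
  have hbound : ∀ n : ℕ, ∀ s ∈ Set.Icc 0 t,
      ‖u s - v s‖ ≤ C * (M * ‖B‖) ^ n * (s ^ n / n.factorial) := by
    intro n
    induction n with
    | zero => simpa using hC
    | succ n ih =>
      intro s hs
      rw [hdiff s hs.1]
      have hB : ∀ r ∈ Set.Icc 0 t, ‖B (u r - v r)‖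
          ≤ ‖B‖ * (C * (M * ‖B‖) ^ n) * (r ^ n / n.factorial) := fun r hr => by
        rw [mul_assoc]
        exact B.le_of_opNorm_le_of_le le_rfl (ih r hr)
      refine (norm_duhamel_le hM hB hs).trans_eq ?_
      rw [pow_succ]
      ring
  have hlim : Tendsto (fun n : ℕ => C * (M * ‖B‖) ^ n * (t ^ n / n.factorial)) atTop (𝓝 0) := by
    have h := (FloorSemiring.tendsto_pow_div_factorial_atTop (M * ‖B‖ * t)).const_mul C
    simpa only [mul_zero, mul_pow (M * ‖B‖), mul_div_assoc, ← mul_assoc] using h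
  exact sub_eq_zero.1 (norm_le_zero_iff.1
    (ge_of_tendsto' hlim fun n => hbound n t ⟨ht, le_rfl⟩))

end Duhamel

section DysonPhillips

/-- The `n`-th term of the Dyson–Phillips series of the orbit at `f` of the semigroup generated by
`A + B`, where `A` is the generator of `T`. -/
def dysonTerm (T : ℝ → E →L[ℝ] E) (B : E →L[ℝ] E) (f : E) : ℕ → ℝ → E
  | 0 => fun t => T (max t 0) f
  | n + 1 => duhamel T fun r => B (dysonTerm T B f n r)

theorem dysonTerm_zero (ht : 0 ≤ t) : dysonTerm T B f 0 t = T t f := by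
  simp only [dysonTerm, max_eq_left ht]

theorem dysonTerm_succ (n : ℕ) :
    dysonTerm T B f (n + 1) t = duhamel T (fun r => B (dysonTerm T B f n r)) t := rfl

theorem norm_dysonTerm_le (hM : ∀ t ∈ Set.Icc 0 τ, ‖T t‖ ≤ M) (n : ℕ) :
    ∀ t ∈ Set.Icc 0 τ,
      ‖dysonTerm T B f n t‖ ≤ M * ‖f‖ * (M * ‖B‖) ^ n * (t ^ n / n.factorial) := by
  induction n with
  | zero =>
    intro t ht
    rw [dysonTerm_zero ht.1]
    simpa using (T t).le_of_opNorm_le (hM t ht) f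
  | succ n ih =>
    intro t ht
    have hB : ∀ r ∈ Set.Icc 0 τ, ‖B (dysonTerm T B f n r)‖
        ≤ ‖B‖ * (M * ‖f‖ * (M * ‖B‖) ^ n) * (r ^ n / n.factorial) := fun r hr => by
      rw [mul_assoc]
      exact B.le_of_opNorm_le_of_le le_rfl (ih r hr)
    refine (norm_duhamel_le hM hB ht).trans_eq ?_
    rw [pow_succ]
    ring

/-- A bound on the `n`-th Dyson–Phillips term on `[0, τ]` which is summable over `n`. -/
def dysonBound (M τ : ℝ) (B : E →L[ℝ] E) (f : E) (n : ℕ) : ℝ :=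
  M * ‖f‖ * ((M * ‖B‖ * τ) ^ n / n.factorial)

theorem summable_dysonBound : Summable (dysonBound M τ B f) :=
  (Real.summable_pow_div_factorial _).mul_left _

theorem norm_dysonTerm_le_dysonBound (hM : ∀ t ∈ Set.Icc 0 τ, ‖T t‖ ≤ M) (n : ℕ)
    (ht : t ∈ Set.Icc 0 τ) : ‖dysonTerm T B f n t‖ ≤ dysonBound M τ B f n := by
  have hM0 : 0 ≤ M := (norm_nonneg _).trans (hM t ht)
  refine (norm_dysonTerm_le hM n t ht).trans ?_
  have hpow : t ^ n ≤ τ ^ n := pow_le_pow_left₀ ht.1 ht.2 n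
  rw [dysonBound, mul_pow (M * ‖B‖) τ, mul_div_assoc, ← mul_assoc]
  gcongr

theorem tsum_dysonBound (M τ : ℝ) (B : E →L[ℝ] E) (f : E) :
    ∑' n, dysonBound M τ B f n = M * Real.exp (M * ‖B‖ * τ) * ‖f‖ := by
  simp only [dysonBound]
  rw [tsum_mul_left, ← congrFun NormedSpace.exp_eq_tsum_div, ← Real.exp_eq_exp_ℝ, mul_right_comm]

/-- The sum of the Dyson–Phillips series, extended to negative times by its value at `0`. -/
def dysonSeries (T : ℝ → E →L[ℝ] E) (B : E →L[ℝ] E) (f : E) (t : ℝ) : E :=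
  ∑' n, dysonTerm T B f n (max t 0)

variable [CompleteSpace E]

theorem IsC0Semigroup.continuous_dysonTerm (hT : IsC0Semigroup T) (B : E →L[ℝ] E) (f : E) (n : ℕ) :
    Continuous (dysonTerm T B f n) := by
  induction n with
  | zero => exact hT.continuous_clamp continuous_id continuous_const
  | succ n ih => exact hT.continuous_duhamel (B.continuous.comp ih)

theorem IsC0Semigroup.summable_dysonTerm (hT : IsC0Semigroup T) (B : E →L[ℝ] E) (f : E)
    (ht : 0 ≤ t) : Summable fun n => dysonTerm T B f n t := by
  obtain ⟨M, hM⟩ := hT.exists_norm_le t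
  exact Summable.of_norm_bounded summable_dysonBound
    fun n => norm_dysonTerm_le_dysonBound hM n ⟨ht, le_rfl⟩

theorem IsC0Semigroup.continuous_dysonSeries (hT : IsC0Semigroup T) (B : E →L[ℝ] E) (f : E) :
    Continuous (dysonSeries T B f) := by
  refine continuous_iff_continuousAt.2 fun t => ?_
  obtain ⟨M, hM⟩ := hT.exists_norm_le (max t 0 + 1)
  have hcont : ContinuousOn (dysonSeries T B f) (Set.Iio (max t 0 + 1)) :=
    continuousOn_tsum
      (fun n => ((hT.continuous_dysonTerm B f n).comp (by fun_prop)).continuousOn)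
      summable_dysonBound fun n s (hs : s < max t 0 + 1) =>
        norm_dysonTerm_le_dysonBound hM n ⟨le_max_right _ _, max_le hs.le (by positivity)⟩
  exact hcont.continuousAt (Iio_mem_nhds (by linarith [le_max_left t 0]))

theorem IsC0Semigroup.hasSum_duhamel_dysonTerm (hT : IsC0Semigroup T) (B : E →L[ℝ] E) (f : E)
    (ht : 0 ≤ t) : HasSum (fun n => dysonTerm T B f (n + 1) t)
      (duhamel T (fun r => B (dysonSeries T B f r)) t) := by
  obtain ⟨M, hM⟩ := hT.exists_norm_le t
  refine intervalIntegral.hasSum_integral_of_dominated_convergence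
    (fun n _ => M * (‖B‖ * dysonBound M t B f n)) (fun n => ?_)
    (fun n => ae_of_all _ fun r hr => ?_)
    (ae_of_all _ fun r _ => (summable_dysonBound.mul_left _).mul_left _)
    intervalIntegrable_const (ae_of_all _ fun r hr => ?_)
  · exact (hT.continuous_clamp (by fun_prop)
      (B.continuous.comp (hT.continuous_dysonTerm B f n))).aestronglyMeasurable
  · rw [Set.uIoc_of_le ht] at hr
    have hr' : max (t - r) 0 ∈ Set.Icc 0 t := ⟨le_max_right _ _, max_le (by linarith [hr.1]) ht⟩
    exact (T _).le_of_opNorm_le_of_le (hM _ hr') (B.le_of_opNorm_le_of_le le_rfl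
      (norm_dysonTerm_le_dysonBound hM n ⟨hr.1.le, hr.2⟩))
  · rw [Set.uIoc_of_le ht] at hr
    simp only [dysonSeries, max_eq_left hr.1.le]
    exact ((hT.summable_dysonTerm B f hr.1.le).hasSum.mapL B).mapL _

theorem IsC0Semigroup.isMildSolution_dysonSeries (hT : IsC0Semigroup T) (B : E →L[ℝ] E) (f : E) :
    IsMildSolution T B f (dysonSeries T B f) := by
  refine ⟨hT.continuous_dysonSeries B f, fun t ht => ?_⟩
  rw [← (hT.hasSum_duhamel_dysonTerm B f ht).tsum_eq, dysonSeries, max_eq_left ht,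
    (hT.summable_dysonTerm B f ht).tsum_eq_zero_add, dysonTerm_zero ht]

theorem IsC0Semigroup.norm_dysonSeries_le (hT : IsC0Semigroup T) (B : E →L[ℝ] E) (t : ℝ) :
    ∃ C, ∀ f, ‖dysonSeries T B f t‖ ≤ C * ‖f‖ := by
  obtain ⟨M, hM⟩ := hT.exists_norm_le (max t 0)
  refine ⟨M * Real.exp (M * ‖B‖ * max t 0), fun f => ?_⟩
  rw [← tsum_dysonBound]
  exact tsum_of_norm_bounded summable_dysonBound.hasSum
    fun n => norm_dysonTerm_le_dysonBound hM n ⟨le_max_right _ _, le_rfl⟩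

theorem IsC0Semigroup.exists_operator_dysonSeries (hT : IsC0Semigroup T) (B : E →L[ℝ] E) :
    ∃ S : ℝ → E →L[ℝ] E, ∀ t, 0 ≤ t → ∀ f, S t f = dysonSeries T B f t := by
  have hlin : ∀ t : ℝ, 0 ≤ t → ∃ U : E →L[ℝ] E, ∀ f, U f = dysonSeries T B f t := fun t ht => by
    obtain ⟨C, hC⟩ := hT.norm_dysonSeries_le B t
    have hmild := hT.isMildSolution_dysonSeries B
    exact ⟨LinearMap.mkContinuous
      { toFun := fun f => dysonSeries T B f t
        map_add' := fun f g => (hmild _).unique hT ((hmild f).add hT (hmild g)) ht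
        map_smul' := fun c f => (hmild _).unique hT ((hmild f).smul c) ht } C hC, fun f => rfl⟩
  choose! S hS using hlin
  exact ⟨S, hS⟩

end DysonPhillips

section BoundedPerturbation

/-- `S` is the `C₀`-semigroup generated by `A + B`, where `A` is the generator of `T` and `B` is a
bounded operator. -/
def IsBoundedPerturbation (T S : ℝ → E →L[ℝ] E) (B : E →L[ℝ] E) : Prop :=
  IsC0Semigroup S ∧ ∀ f g, InGenerator S f g ↔ InGenerator T f (g - B f)

theorem IsC0Semigroup.isBoundedPerturbation_zero (hT : IsC0Semigroup T) :
    IsBoundedPerturbation T T 0 :=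
  ⟨hT, fun f g => by rw [zero_apply, sub_zero]⟩

theorem IsBoundedPerturbation.sub {S₁ S₂ : ℝ → E →L[ℝ] E} {B₁ B₂ : E →L[ℝ] E}
    (h₁ : IsBoundedPerturbation T S₁ B₁) (h₂ : IsBoundedPerturbation T S₂ B₂) :
    IsBoundedPerturbation S₁ S₂ (B₂ - B₁) := by
  refine ⟨h₂.1, fun f g => ?_⟩
  rw [h₂.2, h₁.2, sub_apply, sub_sub, sub_add_cancel]

theorem InGenerator.exp_smul (c : ℝ) (h : InGenerator T f g) :
    InGenerator (fun t => Real.exp (c * t) • T t) f (g + c • f) := by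
  have hexp : HasDerivAt (fun t : ℝ => Real.exp (c * t)) c 0 := by
    simpa using ((hasDerivAt_id (0 : ℝ)).const_mul c).exp
  have hslope : Tendsto (fun t : ℝ => t⁻¹ * (Real.exp (c * t) - 1)) (𝓝[>] 0) (𝓝 c) := by
    simpa using hexp.tendsto_slope_zero_right
  have hone : Tendsto (fun t : ℝ => Real.exp (c * t)) (𝓝[>] 0) (𝓝 1) := by
    simpa using (hexp.continuousAt.tendsto.mono_left nhdsWithin_le_nhds)
  have hsum := (hone.smul h).add (hslope.smul_const f)
  rw [one_smul] at hsum
  refine hsum.congr fun t => ?_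
  rw [smul_apply]
  module

theorem IsC0Semigroup.exp_smul (c : ℝ) (hT : IsC0Semigroup T) :
    IsC0Semigroup fun t => Real.exp (c * t) • T t := by
  refine ⟨⟨?_, fun s t hs ht => ?_⟩, fun f => ContinuousOn.smul (by fun_prop) (hT.2 f)⟩
  · simp only [mul_zero, Real.exp_zero, one_smul, hT.1.1]
  · simp only [hT.1.2 s t hs ht, mul_add, Real.exp_add, ContinuousLinearMap.smul_comp,
      ContinuousLinearMap.comp_smul, smul_smul, mul_comm]

theorem IsBoundedPerturbation.exp_smul (c : ℝ) (h : IsBoundedPerturbation T S B) :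
    IsBoundedPerturbation T (fun t => Real.exp (c * t) • S t)
      (B + c • ContinuousLinearMap.id ℝ E) := by
  refine ⟨h.1.exp_smul c, fun f g => ?_⟩
  have hgB : g - (B + c • ContinuousLinearMap.id ℝ E) f = g - c • f - B f := by
    simp only [add_apply, smul_apply,
      ContinuousLinearMap.id_apply]
    abel
  rw [hgB, ← h.2]
  refine ⟨fun hg => ?_, fun hg => by simpa using hg.exp_smul c⟩
  simpa [smul_smul, ← Real.exp_add, sub_eq_add_neg] using hg.exp_smul (-c)

variable [CompleteSpace E]

theorem IsC0Semigroup.inGenerator_iff_of_isMildSolution (hT : IsC0Semigroup T)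
    (hu : IsMildSolution T B f u) (huS : ∀ t, 0 ≤ t → S t f = u t) :
    InGenerator S f g ↔ InGenerator T f (g - B f) := by
  have hu0 : u 0 = f := by
    simpa [duhamel, hT.1.zero_apply] using hu.eq_add 0 le_rfl
  have hpert : Tendsto (fun t : ℝ => t⁻¹ • duhamel T (fun r => B (u r)) t) (𝓝[>] 0) (𝓝 (B f)) := by
    simpa only [hu0] using hT.tendsto_inv_smul_duhamel hu.continuous_map
  have hsplit : ∀ t : ℝ, 0 < t → t⁻¹ • (S t f - f)
      = t⁻¹ • (T t f - f) + t⁻¹ • duhamel T (fun r => B (u r)) t := fun t ht => by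
    rw [huS t ht.le, hu.eq_add t ht.le, ← smul_add, sub_add_eq_add_sub]
  constructor <;> intro h
  · refine (h.sub hpert).congr' ?_
    filter_upwards [self_mem_nhdsWithin] with t ht
    rw [hsplit t ht, add_sub_cancel_right]
  · have hadd := h.add hpert
    rw [sub_add_cancel] at hadd
    refine hadd.congr' ?_
    filter_upwards [self_mem_nhdsWithin] with t ht
    rw [hsplit t ht]

theorem IsC0Semigroup.exists_isBoundedPerturbation_dysonSeries (hT : IsC0Semigroup T)
    (B : E →L[ℝ] E) :
    ∃ S, IsBoundedPerturbation T S B ∧ ∀ t, 0 ≤ t → ∀ f, S t f = dysonSeries T B f t := by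
  obtain ⟨S, hS⟩ := hT.exists_operator_dysonSeries B
  have hmild := hT.isMildSolution_dysonSeries B
  have hsemigroup : IsSemigroup S := by
    refine ⟨ContinuousLinearMap.ext fun f => ?_,
      fun s t hs ht => ContinuousLinearMap.ext fun f => ?_⟩
    · simpa [hS 0 le_rfl, duhamel, hT.1.zero_apply] using (hmild f).eq_add 0 le_rfl
    · rw [ContinuousLinearMap.comp_apply, hS t ht, hS s hs, hS _ (add_nonneg hs ht)]
      exact ((hmild f).shift hT ht).unique hT (hmild _) hs
  have hcont : ∀ f, ContinuousOn (fun t => S t f) (Set.Ici 0) := fun f =>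
    (hT.continuous_dysonSeries B f).continuousOn.congr fun t ht => hS t ht f
  exact ⟨S, ⟨⟨hsemigroup, hcont⟩, fun f g =>
    hT.inGenerator_iff_of_isMildSolution (hmild f) fun t ht => hS t ht f⟩, hS⟩

theorem IsC0Semigroup.exists_isBoundedPerturbation (hT : IsC0Semigroup T) (B : E →L[ℝ] E) :
    ∃ S, IsBoundedPerturbation T S B :=
  (hT.exists_isBoundedPerturbation_dysonSeries B).imp fun _ h => h.1

theorem IsBoundedPerturbation.apply_eq_tsum (hT : IsC0Semigroup T)
    (h : IsBoundedPerturbation T S B) (ht : 0 ≤ t) (f : E) :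
    S t f = ∑' n, dysonTerm T B f n t := by
  obtain ⟨U, hU, hUseries⟩ := hT.exists_isBoundedPerturbation_dysonSeries B
  rw [hU.1.eq_of_inGenerator_imp h.1 (fun f g hg => (hU.2 f g).2 ((h.2 f g).1 hg)) ht,
    hUseries t ht, dysonSeries, max_eq_left ht]

end BoundedPerturbation

section StrongConvergence

variable {ι : Type*} {l : Filter ι}

/-- A family of operator families which is bounded in operator norm on `[0, τ]`, uniformly in the
index, for every `τ`. -/
def LocallyEquibounded (S : ι → ℝ → E →L[ℝ] E) : Prop :=
  ∀ τ, ∃ M, ∀ i, ∀ t ∈ Set.Icc 0 τ, ‖S i t‖ ≤ M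

theorem tendsto_apply_of_opNorm_le {A : ι → E →L[ℝ] E} {x : ι → E} {y z : E}
    (hA : ∀ i, ‖A i‖ ≤ M) (hAy : Tendsto (fun i => A i y) l (𝓝 z)) (hx : Tendsto x l (𝓝 y)) :
    Tendsto (fun i => A i (x i)) l (𝓝 z) := by
  have hbound : Tendsto (fun i => M * ‖x i - y‖) l (𝓝 0) := by
    simpa only [sub_self, norm_zero, mul_zero] using ((hx.sub_const y).norm).const_mul M
  have hdiff : Tendsto (fun i => A i (x i - y)) l (𝓝 0) :=
    squeeze_zero_norm (fun i => (A i).le_of_opNorm_le (hA i) _) hbound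
  simpa only [map_sub, sub_add_cancel, zero_add] using hdiff.add hAy

theorem LocallyEquibounded.of_tendsto [l.NeBot] {S : ι → ℝ → E →L[ℝ] E}
    (hbd : LocallyEquibounded S)
    (hlim : ∀ t, 0 ≤ t → ∀ f, Tendsto (fun i => S i t f) l (𝓝 (T t f))) (τ : ℝ) :
    ∃ M, ∀ t ∈ Set.Icc 0 τ, ‖T t‖ ≤ M := by
  obtain ⟨M, hM⟩ := hbd τ
  have ⟨i⟩ := l.nonempty_of_neBot
  exact ⟨M, fun t ht => (T t).opNorm_le_bound ((norm_nonneg _).trans (hM i t ht)) fun f =>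
    le_of_tendsto' (hlim t ht.1 f).norm fun j => (S j t).le_of_opNorm_le (hM j t ht) f⟩

theorem IsSemigroup.of_tendsto [l.NeBot] {S : ι → ℝ → E →L[ℝ] E} (hS : ∀ i, IsSemigroup (S i))
    (hbd : LocallyEquibounded S)
    (hlim : ∀ t, 0 ≤ t → ∀ f, Tendsto (fun i => S i t f) l (𝓝 (T t f))) : IsSemigroup T := by
  refine ⟨ContinuousLinearMap.ext fun f => ?_, fun s t hs ht => ContinuousLinearMap.ext fun f => ?_⟩
  · refine tendsto_nhds_unique (hlim 0 le_rfl f) ?_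
    simp only [(hS _).zero_apply, ContinuousLinearMap.id_apply, tendsto_const_nhds]
  · obtain ⟨M, hM⟩ := hbd s
    refine tendsto_nhds_unique (hlim _ (add_nonneg hs ht) f) ?_
    simp only [(hS _).add_apply hs ht]
    exact tendsto_apply_of_opNorm_le (fun i => hM i s ⟨hs, le_rfl⟩) (hlim s hs _) (hlim t ht f)

theorem IsSemigroup.isC0Semigroup (hT : IsSemigroup T)
    (hbd : ∀ τ, ∃ M, ∀ t ∈ Set.Icc 0 τ, ‖T t‖ ≤ M)
    (h0 : ∀ f, Tendsto (fun t => T t f) (𝓝[≥] 0) (𝓝 f)) : IsC0Semigroup T := by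
  refine ⟨hT, fun f t (ht : 0 ≤ t) => ?_⟩
  obtain ⟨M, hM⟩ := hbd t
  have hdist : Tendsto (fun s => |s - t|) (𝓝[Set.Ici 0] t) (𝓝[≥] 0) := by
    refine tendsto_nhdsWithin_iff.2 ⟨?_, Eventually.of_forall fun s => Set.mem_Ici.2 (abs_nonneg _)⟩
    have hcont : Continuous fun s : ℝ => |s - t| := by fun_prop
    exact (hcont.tendsto' t 0 (by simp)).mono_left nhdsWithin_le_nhds
  have hbound : Tendsto (fun s => M * ‖T |s - t| f - f‖) (𝓝[Set.Ici 0] t) (𝓝 0) := by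
    simpa using ((((h0 f).comp hdist).sub_const f).norm).const_mul M
  refine tendsto_iff_norm_sub_tendsto_zero.2
    (squeeze_zero' (Eventually.of_forall fun _ => norm_nonneg _) ?_ hbound)
  filter_upwards [self_mem_nhdsWithin] with s (hs : 0 ≤ s)
  have hstep : ∀ a b, 0 ≤ a → a ≤ b → T b f - T a f = T a (T (b - a) f - f) := fun a b ha hab => by
    rw [map_sub, ← hT.add_apply ha (sub_nonneg.2 hab), add_sub_cancel]
  rcases le_total s t with hst | hts
  · rw [norm_sub_rev, hstep s t hs hst, abs_sub_comm, abs_of_nonneg (sub_nonneg.2 hst)]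
    exact (T s).le_of_opNorm_le (hM s ⟨hs, hst⟩) _
  · rw [hstep t s ht hts, abs_of_nonneg (sub_nonneg.2 hts)]
    exact (T t).le_of_opNorm_le (hM t ⟨ht, le_rfl⟩) _

variable [CompleteSpace E] {G : Type*} [NormedAddCommGroup G] [NormedSpace ℝ G] [CompleteSpace G]
  {R U : ℝ → G →L[ℝ] G} {C : G →L[ℝ] G} {S D : ι → ℝ → E →L[ℝ] E} {J : G →L[ℝ] E}
  [l.IsCountablyGenerated]

theorem tendsto_duhamel (hS : ∀ i, IsC0Semigroup (S i)) (hbd : LocallyEquibounded S)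
    (hR : IsC0Semigroup R)
    (hlim : ∀ t, 0 ≤ t → ∀ x, Tendsto (fun i => S i t (J x)) l (𝓝 (J (R t x))))
    {u : ι → ℝ → E} {v : ℝ → G} (hu : ∀ i, Continuous (u i)) (hv : Continuous v) (ht : 0 ≤ t)
    {K : ℝ} (hK : ∀ i, ∀ r ∈ Set.Icc 0 t, ‖u i r‖ ≤ K)
    (huv : ∀ r, 0 ≤ r → Tendsto (fun i => u i r) l (𝓝 (J (v r)))) :
    Tendsto (fun i => duhamel (S i) (u i) t) l (𝓝 (J (duhamel R v t))) := by
  obtain ⟨M, hM⟩ := hbd t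
  rw [duhamel, ← J.intervalIntegral_comp_comm (hR.intervalIntegrable_duhamel hv _ _ _)]
  have hclamp : ∀ r ∈ Set.uIoc 0 t, r ∈ Set.Icc 0 t ∧ max (t - r) 0 ∈ Set.Icc 0 t := fun r hr => by
    rw [Set.uIoc_of_le ht] at hr
    exact ⟨⟨hr.1.le, hr.2⟩, le_max_right _ _, max_le (by linarith [hr.1]) ht⟩
  refine intervalIntegral.tendsto_integral_filter_of_dominated_convergence (fun _ => M * K)
    (Eventually.of_forall fun i =>
      ((hS i).continuous_clamp (by fun_prop) (hu i)).aestronglyMeasurable)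
    (Eventually.of_forall fun i => ae_of_all _ fun r hr => ?_) intervalIntegrable_const
    (ae_of_all _ fun r hr => ?_)
  · exact (S i _).le_of_opNorm_le_of_le (hM i _ (hclamp r hr).2) (hK i r (hclamp r hr).1)
  · exact tendsto_apply_of_opNorm_le (fun i => hM i _ (hclamp r hr).2)
      (hlim _ (le_max_right _ _) (v r)) (huv r (hclamp r hr).1.1)

theorem tendsto_dysonTerm (hS : ∀ i, IsC0Semigroup (S i)) (hbd : LocallyEquibounded S)
    (hR : IsC0Semigroup R)
    (hlim : ∀ t, 0 ≤ t → ∀ x, Tendsto (fun i => S i t (J x)) l (𝓝 (J (R t x))))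
    (hJB : ∀ x, J (C x) = B (J x)) (x : G) (n : ℕ) :
    ∀ t, 0 ≤ t →
      Tendsto (fun i => dysonTerm (S i) B (J x) n t) l (𝓝 (J (dysonTerm R C x n t))) := by
  induction n with
  | zero =>
    intro t ht
    simpa only [dysonTerm_zero ht] using hlim t ht x
  | succ n ih =>
    intro t ht
    obtain ⟨M, hM⟩ := hbd t
    simp only [dysonTerm_succ]
    refine tendsto_duhamel hS hbd hR hlim
      (fun i => B.continuous.comp ((hS i).continuous_dysonTerm B (J x) n))
      (C.continuous.comp (hR.continuous_dysonTerm C x n)) ht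
      (fun i r hr => B.le_of_opNorm_le_of_le le_rfl (norm_dysonTerm_le_dysonBound (hM i) n hr))
      fun r hr => ?_
    rw [hJB]
    exact (B.continuous.tendsto _).comp (ih r hr)

theorem IsBoundedPerturbation.tendsto (hS : ∀ i, IsC0Semigroup (S i))
    (hbd : LocallyEquibounded S) (hR : IsC0Semigroup R)
    (hlim : ∀ t, 0 ≤ t → ∀ x, Tendsto (fun i => S i t (J x)) l (𝓝 (J (R t x))))
    (hJB : ∀ x, J (C x) = B (J x)) (hD : ∀ i, IsBoundedPerturbation (S i) (D i) B)
    (hU : IsBoundedPerturbation R U C) (ht : 0 ≤ t) (x : G) :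
    Tendsto (fun i => D i t (J x)) l (𝓝 (J (U t x))) := by
  obtain ⟨M, hM⟩ := hbd t
  rw [hU.apply_eq_tsum hR ht, J.map_tsum (hR.summable_dysonTerm C x ht)]
  simp only [fun i => (hD i).apply_eq_tsum (hS i) ht]
  exact tendsto_tsum_of_dominated_convergence summable_dysonBound
    (fun n => tendsto_dysonTerm hS hbd hR hlim hJB x n t ht)
    (Eventually.of_forall fun i n => norm_dysonTerm_le_dysonBound (hM i) n ⟨ht, le_rfl⟩)

end StrongConvergence

end Semigroup

section Positivity

/-- The order of operators on an ordered vector space: `S f ≤ T f` for all `f ≥ 0`. -/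
def OpLE {E : Type*} [NormedAddCommGroup E] [NormedSpace ℝ E] [PartialOrder E]
    (S T : E →L[ℝ] E) : Prop := ∀ f, 0 ≤ f → S f ≤ T f

local infix:50 "≼" => OpLE

section OperatorOrder

variable {E : Type*} [NormedAddCommGroup E] [NormedSpace ℝ E] [PartialOrder E]
  [IsOrderedAddMonoid E] {S T : E →L[ℝ] E}

theorem zero_opLE_sub : 0 ≼ T - S ↔ S ≼ T :=
  forall₂_congr fun _ _ => sub_nonneg

theorem zero_opLE_sub_add {U : E →L[ℝ] E} (hS : 0 ≼ S) (hTU : T ≼ U) : 0 ≼ S - T + U :=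
  fun f hf => by
    rw [sub_add_eq_add_sub, add_sub_assoc]
    exact add_nonneg (hS f hf) (sub_nonneg.2 (hTU f hf))

theorem OpLE.monotone (hT : 0 ≼ T) : Monotone T := fun f g hfg => by
  simpa using hT (g - f) (sub_nonneg.2 hfg)

section Perturbation

variable [IsOrderedModule ℝ E] [OrderClosedTopology E] {T S S₁ S₂ : ℝ → E →L[ℝ] E}
  {B B₁ B₂ : E →L[ℝ] E} {c t : ℝ}

theorem dysonTerm_nonneg (hT : ∀ t, 0 ≤ t → 0 ≼ T t) (hB : 0 ≼ B) {f : E} (hf : 0 ≤ f) (n : ℕ) :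
    ∀ t, 0 ≤ t → 0 ≤ dysonTerm T B f n t := by
  induction n with
  | zero => exact fun t _ => hT _ (le_max_right t 0) f hf
  | succ n ih =>
    intro t ht
    rw [dysonTerm_succ, duhamel, intervalIntegral.integral_of_le ht]
    refine integral_nonneg_of_ae (ae_restrict_of_forall_mem measurableSet_Ioc fun r hr => ?_)
    exact hT _ (le_max_right _ _) _ (hB _ (ih r hr.1.le))

variable [CompleteSpace E]

theorem IsBoundedPerturbation.le_of_nonneg (hT : IsC0Semigroup T) (hTpos : ∀ t, 0 ≤ t → 0 ≼ T t)
    (hB : 0 ≼ B) (h : IsBoundedPerturbation T S B) (ht : 0 ≤ t) : T t ≼ S t := fun f hf => by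
  rw [h.apply_eq_tsum hT ht f, ← dysonTerm_zero (B := B) ht]
  exact (hT.summable_dysonTerm B f ht).le_tsum 0
    fun n _ => dysonTerm_nonneg hTpos hB hf n t ht

theorem IsBoundedPerturbation.nonneg (hT : IsC0Semigroup T) (hTpos : ∀ t, 0 ≤ t → 0 ≼ T t)
    (hB : 0 ≼ B + c • ContinuousLinearMap.id ℝ E) (h : IsBoundedPerturbation T S B)
    (ht : 0 ≤ t) : 0 ≼ S t := fun f hf => by
  have hscaled : 0 ≤ Real.exp (c * t) • S t f :=
    (hTpos t ht f hf).trans ((h.exp_smul c).le_of_nonneg hT hTpos hB ht f hf)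
  simpa only [zero_apply, inv_smul_smul₀ (Real.exp_pos (c * t)).ne'] using
    smul_nonneg (inv_nonneg.2 (Real.exp_pos (c * t)).le) hscaled

theorem IsBoundedPerturbation.mono (hT : IsC0Semigroup T) (hTpos : ∀ t, 0 ≤ t → 0 ≼ T t)
    (hB₁ : 0 ≼ B₁ + c • ContinuousLinearMap.id ℝ E) (h₁ : IsBoundedPerturbation T S₁ B₁)
    (h₂ : IsBoundedPerturbation T S₂ B₂) (hB : B₁ ≼ B₂) (ht : 0 ≤ t) : S₁ t ≼ S₂ t :=
  (h₁.sub h₂).le_of_nonneg h₁.1 (fun _ => h₁.nonneg hT hTpos hB₁) (zero_opLE_sub.2 hB) ht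

theorem IsBoundedPerturbation.nonneg_and_opLE (hT : IsC0Semigroup T)
    (hTpos : ∀ t, 0 ≤ t → 0 ≼ T t) (hB₁ : 0 ≼ B₁) (hB : B₁ ≼ B₂)
    (hB₂ : B₂ ≼ c • ContinuousLinearMap.id ℝ E) (h : IsBoundedPerturbation T S (B₁ - B₂))
    (ht : 0 ≤ t) : 0 ≼ S t ∧ S t ≼ T t :=
  have hc := zero_opLE_sub_add hB₁ hB₂
  ⟨h.nonneg hT hTpos hc ht,
    h.mono hT hTpos hc hT.isBoundedPerturbation_zero (fun f hf => sub_nonpos.2 (hB f hf)) ht⟩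

end Perturbation

end OperatorOrder

section BanachLattice

open LatticeOrderedAddCommGroup

variable {E : Type*} [NormedAddCommGroup E] [Lattice E] [IsOrderedAddMonoid E]

/-- Order continuity of the norm of a Banach lattice, in the equivalent form that every increasing
order bounded sequence converges. -/
def HasOrderContinuousNorm (E : Type*) [NormedAddCommGroup E] [PartialOrder E] : Prop :=
  ∀ u : ℕ → E, Monotone u → BddAbove (Set.range u) → ∃ l, Tendsto u atTop (𝓝 l)

theorem tendsto_of_le_of_le [HasSolidNorm E] {ι : Type*} {l : Filter ι} {u v w : ι → E} {x : E}
    (hu : Tendsto u l (𝓝 x)) (hw : Tendsto w l (𝓝 x)) (huv : ∀ᶠ i in l, u i ≤ v i)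
    (hvw : ∀ᶠ i in l, v i ≤ w i) : Tendsto v l (𝓝 x) := by
  have hbound : Tendsto (fun i => ‖w i - u i‖) l (𝓝 0) := by
    simpa only [sub_self, norm_zero] using (hw.sub hu).norm
  have hdiff : Tendsto (fun i => v i - u i) l (𝓝 0) := by
    refine squeeze_zero_norm' ?_ hbound
    filter_upwards [huv, hvw] with i h₁ h₂
    exact norm_le_norm_of_abs_le_abs
      (abs_le_abs_of_nonneg (sub_nonneg.2 h₁) (sub_le_sub_right h₂ _))
  simpa only [sub_add_cancel, zero_add] using hdiff.add hu

variable [NormedSpace ℝ E]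

theorem OpLE.abs_apply_le {T : E →L[ℝ] E} (hT : 0 ≼ T) (f : E) : |T f| ≤ T |f| :=
  abs_le'.2 ⟨hT.monotone (le_abs_self f), by
    rw [← map_neg]
    exact hT.monotone (neg_le_abs f)⟩

theorem OpLE.opNorm_le [HasSolidNorm E] {S T : E →L[ℝ] E} (hS : 0 ≼ S) (hST : S ≼ T) :
    ‖S‖ ≤ ‖T‖ := by
  refine S.opNorm_le_bound (norm_nonneg _) fun f => ?_
  have habs : |S f| ≤ |T (|f|)| :=
    (hS.abs_apply_le f).trans ((hST _ (abs_nonneg f)).trans (le_abs_self _))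
  simpa only [norm_abs_eq_norm] using
    (norm_le_norm_of_abs_le_abs habs).trans (T.le_opNorm |f|)

section Ideal

variable {F : Submodule ℝ E}

theorem exists_nonneg_sub_of_isSolid (hF : IsSolid (F : Set E)) (f : F) :
    ∃ g h : F, 0 ≤ g ∧ 0 ≤ h ∧ f = g - h := by
  have hmem : ∀ x : E, 0 ≤ x → x ≤ |(f : E)| → x ∈ F := fun x h₀ h₁ =>
    hF f.2 ((abs_of_nonneg h₀).trans_le h₁)
  refine ⟨⟨(f : E)⁺, hmem _ (posPart_nonneg _) (sup_le (le_abs_self _) (abs_nonneg _))⟩,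
    ⟨(f : E)⁻, hmem _ (negPart_nonneg _) (sup_le (neg_le_abs _) (abs_nonneg _))⟩,
    posPart_nonneg (f : E), negPart_nonneg (f : E), Subtype.ext (posPart_sub_negPart _).symm⟩

theorem mapsTo_of_isSolid (hF : IsSolid (F : Set E)) {B : E →L[ℝ] E} {c : ℝ} (hB : 0 ≼ B)
    (hBc : B ≼ c • ContinuousLinearMap.id ℝ E) : ∀ f ∈ F, B f ∈ F := fun f hf =>
  hF (F.smul_mem c (hF hf (abs_abs f).le))
    ((hB.abs_apply_le f).trans ((hBc _ (abs_nonneg f)).trans (le_abs_self _)))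

theorem isSolid_range_of_comp_self {P : E →L[ℝ] E} (hP : P.comp P = P) (hP0 : 0 ≼ P)
    (hP1 : P ≼ ContinuousLinearMap.id ℝ E) : IsSolid (Set.range P) := by
  rintro _ ⟨f₀, rfl⟩ g hg
  set f := P f₀
  have hPf : P f = f := DFunLike.congr_fun hP f₀
  have hPabs : P |f| = |f| :=
    le_antisymm (hP1 _ (abs_nonneg f)) (by simpa only [hPf] using hP0.abs_apply_le f)
  have hP' : 0 ≼ ContinuousLinearMap.id ℝ E - P := zero_opLE_sub.2 hP1
  have hzero : |g - P g| ≤ 0 := by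
    simpa only [sub_apply, ContinuousLinearMap.id_apply, hPabs, sub_self] using
      (hP'.abs_apply_le g).trans (hP'.monotone hg)
  exact ⟨g, (sub_eq_zero.1 (le_antisymm ((le_abs_self _).trans hzero)
    (neg_nonpos.1 ((neg_le_abs _).trans hzero)))).symm⟩

variable [CompleteSpace E]

theorem exists_clm_tendsto_of_monotone (hE : HasOrderContinuousNorm E) (hF : IsSolid (F : Set E))
    (hFc : IsClosed (F : Set E)) {U : ℕ → F →L[ℝ] F} {T : E →L[ℝ] E}
    (hmono : ∀ n, U n ≼ U (n + 1)) (hUT : ∀ n, ∀ f : F, 0 ≤ f → (U n f : E) ≤ T f) :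
    ∃ L : F →L[ℝ] F, ∀ f, Tendsto (fun n => U n f) atTop (𝓝 (L f)) := by
  have hpos : ∀ f : F, 0 ≤ f → ∃ l, Tendsto (fun n => U n f) atTop (𝓝 l) := fun f hf => by
    obtain ⟨l, hl⟩ := hE (fun n => (U n f : E))
      (monotone_nat_of_le_succ fun n => hmono n f hf)
      ⟨T f, Set.forall_mem_range.2 fun n => hUT n f hf⟩
    exact ⟨⟨l, hFc.mem_of_tendsto hl (Eventually.of_forall fun n => (U n f).2)⟩,
      tendsto_subtype_rng.2 hl⟩
  have hall : ∀ f : F, ∃ l, Tendsto (fun n => U n f) atTop (𝓝 l) := fun f => by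
    obtain ⟨g, h, hg, hh, rfl⟩ := exists_nonneg_sub_of_isSolid hF f
    obtain ⟨⟨a, ha⟩, b, hb⟩ := hpos g hg, hpos h hh
    exact ⟨a - b, by simpa only [map_sub] using ha.sub hb⟩
  choose l hl using hall
  have : CompleteSpace F := hFc.completeSpace_coe
  exact ⟨continuousLinearMapOfTendsto U (tendsto_pi_nhds.2 hl), hl⟩

theorem IsC0Semigroup.exists_tendsto_of_monotone [HasSolidNorm E]
    (hE : HasOrderContinuousNorm E) (hF : IsSolid (F : Set E)) (hFc : IsClosed (F : Set E))
    {T : ℝ → E →L[ℝ] E} (hT : IsC0Semigroup T) {U : ℕ → ℝ → F →L[ℝ] F}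
    (hU : ∀ n, IsC0Semigroup (U n)) (hbd : LocallyEquibounded U)
    (hmono : ∀ n t, 0 ≤ t → U n t ≼ U (n + 1) t)
    (hUT : ∀ n t, 0 ≤ t → ∀ f : F, 0 ≤ f → (U n t f : E) ≤ T t f) :
    ∃ L : ℝ → F →L[ℝ] F,
      (∀ t, 0 ≤ t → ∀ f, Tendsto (fun n => U n t f) atTop (𝓝 (L t f))) ∧ IsC0Semigroup L := by
  have hex : ∀ t : ℝ, 0 ≤ t → ∃ L : F →L[ℝ] F, ∀ f, Tendsto (fun n => U n t f) atTop (𝓝 (L f)) :=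
    fun t ht => exists_clm_tendsto_of_monotone hE hF hFc (fun n => hmono n t ht)
      fun n => hUT n t ht
  choose! L hL using hex
  have hLS : IsSemigroup L := IsSemigroup.of_tendsto (fun n => (hU n).1) hbd hL
  have hcont₀ : ∀ f : F, 0 ≤ f → Tendsto (fun t => L t f) (𝓝[≥] 0) (𝓝 f) := fun f hf => by
    refine tendsto_subtype_rng.2 (tendsto_of_le_of_le
      (tendsto_subtype_rng.1 ((hU 0).tendsto_zero f)) (hT.tendsto_zero (f : E)) ?_ ?_)
    · filter_upwards [self_mem_nhdsWithin] with t (ht : 0 ≤ t)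
      have hmonot : Monotone fun n => U n t f := monotone_nat_of_le_succ fun n => hmono n t ht f hf
      exact hmonot.ge_of_tendsto (hL t ht f) 0
    · filter_upwards [self_mem_nhdsWithin] with t (ht : 0 ≤ t)
      exact le_of_tendsto' (tendsto_subtype_rng.1 (hL t ht f)) fun n => hUT n t ht f hf
  refine ⟨L, hL, hLS.isC0Semigroup (hbd.of_tendsto hL) fun f => ?_⟩
  obtain ⟨g, h, hg, hh, rfl⟩ := exists_nonneg_sub_of_isSolid hF f
  simpa only [map_sub] using (hcont₀ g hg).sub (hcont₀ h hh)

end Ideal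

section MonotonePerturbation

variable [HasSolidNorm E] {F : Submodule ℝ E}
  {T : ℝ → E →L[ℝ] E} {S : ℕ → ℝ → E →L[ℝ] E} {B : ℕ → E →L[ℝ] E} {c : ℕ → ℝ}
  {R : ℝ → F →L[ℝ] F} {U : ℕ → ℝ → F →L[ℝ] F} {C : ℕ → F →L[ℝ] F}

theorem opNorm_le_of_tendsto_of_opLE {A : ℕ → E →L[ℝ] E} {A' : E →L[ℝ] E} {L : F →L[ℝ] F}
    (hA : ∀ᶠ n in atTop, 0 ≼ A n ∧ A n ≼ A')
    (hlim : ∀ f : F, Tendsto (fun n => A n (f : E)) atTop (𝓝 (L f : E))) : ‖L‖ ≤ ‖A'‖ :=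
  L.opNorm_le_bound (norm_nonneg _) fun f => le_of_tendsto (hlim f).norm <| by
    filter_upwards [hA] with n hn
    exact (A n).le_of_opNorm_le (hn.1.opNorm_le hn.2) (f : E)

variable [IsOrderedModule ℝ E] [CompleteSpace E]

theorem locallyEquibounded_of_isBoundedPerturbation_neg (hT : IsC0Semigroup T)
    (hTpos : ∀ t, 0 ≤ t → 0 ≼ T t)
    (hB : ∀ n, 0 ≼ B n) (hBc : ∀ n, B n ≼ c n • ContinuousLinearMap.id ℝ E)
    (hS : ∀ n, IsBoundedPerturbation T (S n) (-B n)) : LocallyEquibounded S := fun τ => by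
  obtain ⟨M, hM⟩ := hT.exists_norm_le τ
  refine ⟨M, fun n t ht => ?_⟩
  obtain ⟨hS0, hST⟩ := IsBoundedPerturbation.nonneg_and_opLE (B₁ := 0) hT hTpos
    (fun _ _ => le_rfl) (hB n) (hBc n) (by simpa only [zero_sub] using hS n) ht.1
  exact (hS0.opNorm_le hST).trans (hM t ht)

theorem IsC0Semigroup.exists_tendsto_of_restrict_absorption (hE : HasOrderContinuousNorm E)
    (hT : IsC0Semigroup T) (hTpos : ∀ t, 0 ≤ t → 0 ≼ T t)
    (hB : ∀ n, 0 ≼ B n) (hBc : ∀ n, B n ≼ c n • ContinuousLinearMap.id ℝ E)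
    (hBmono : ∀ n m, n ≤ m → B n ≼ B m)
    (hS : ∀ n, IsBoundedPerturbation T (S n) (-B n))
    (hF : IsSolid (F : Set E)) (hFc : IsClosed (F : Set E)) (hR : IsC0Semigroup R)
    (hSR : ∀ t, 0 ≤ t → ∀ f : F, Tendsto (fun n => S n t (f : E)) atTop (𝓝 (R t f : E)))
    (hC : ∀ n f, (C n f : E) = B n f) (hU : ∀ n, IsBoundedPerturbation R (U n) (C n)) :
    ∃ L : ℝ → F →L[ℝ] F,
      (∀ t, 0 ≤ t → ∀ f, Tendsto (fun n => U n t f) atTop (𝓝 (L t f))) ∧ IsC0Semigroup L := by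
  have : CompleteSpace F := hFc.completeSpace_coe
  choose D hD using fun m n => hT.exists_isBoundedPerturbation (B n - B m)
  have hSbd : LocallyEquibounded S :=
    locallyEquibounded_of_isBoundedPerturbation_neg hT hTpos hB hBc hS
  have hDlim : ∀ n t, 0 ≤ t → ∀ f : F, Tendsto (fun m => D m n t (f : E)) atTop (𝓝 (U n t f : E)) :=
    fun n t ht f => IsBoundedPerturbation.tendsto (J := F.subtypeL) (fun m => (hS m).1) hSbd hR hSR
      (hC n) (fun m => by simpa only [sub_neg_eq_add, sub_add_cancel] using (hS m).sub (hD m n))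
      (hU n) ht f
  have hDmono : ∀ m n t, 0 ≤ t → D m n t ≼ D m (n + 1) t := fun m n t ht =>
    (hD m n).mono hT hTpos (zero_opLE_sub_add (hB n) (hBc m)) (hD m (n + 1))
      (fun f hf => sub_le_sub_right (hBmono n (n + 1) n.le_succ f hf) _) ht
  have hDT : ∀ n t, 0 ≤ t → ∀ᶠ m in atTop, 0 ≼ D m n t ∧ D m n t ≼ T t := fun n t ht => by
    filter_upwards [eventually_ge_atTop n] with m hnm
    exact (hD m n).nonneg_and_opLE hT hTpos (hB n) (hBmono n m hnm) (hBc m) ht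
  refine IsC0Semigroup.exists_tendsto_of_monotone hE hF hFc hT (fun n => (hU n).1) (fun τ => ?_)
    (fun n t ht f hf => ?_) fun n t ht f hf => ?_
  · obtain ⟨M, hM⟩ := hT.exists_norm_le τ
    exact ⟨M, fun n t ht => (opNorm_le_of_tendsto_of_opLE (hDT n t ht.1) (hDlim n t ht.1)).trans
      (hM t ht)⟩
  · exact Subtype.coe_le_coe.1 (le_of_tendsto_of_tendsto' (hDlim n t ht f) (hDlim (n + 1) t ht f)
      fun m => hDmono m n t ht f hf)
  · exact le_of_tendsto (hDlim n t ht f) ((hDT n t ht).mono fun m hm => hm.2 f hf)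

end MonotonePerturbation

end BanachLattice

section Lp

theorem trunc_nonneg {Ω : Type*} (V : Ω → ℝ≥0∞) (n : ℕ) (ω : Ω) : 0 ≤ trunc V n ω :=
  ENNReal.toReal_nonneg

theorem trunc_le {Ω : Type*} (V : Ω → ℝ≥0∞) (n : ℕ) (ω : Ω) : trunc V n ω ≤ n :=
  ENNReal.toReal_mono (ENNReal.natCast_ne_top n) (min_le_right _ _)

theorem trunc_mono {Ω : Type*} (V : Ω → ℝ≥0∞) {n m : ℕ} (h : n ≤ m) (ω : Ω) :
    trunc V n ω ≤ trunc V m ω :=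
  ENNReal.toReal_mono (ne_top_of_le_ne_top (ENNReal.natCast_ne_top m) (min_le_right _ _))
    (min_le_min_left _ (Nat.cast_le.2 h))

variable {Ω : Type*} [MeasurableSpace Ω] {μ : Measure Ω} {p : ℝ≥0∞}

instance [Fact (1 ≤ p)] : IsOrderedModule ℝ (Lp ℝ p μ) :=
  IsOrderedModule.of_smul_nonneg fun a ha f hf => by
    rw [← Lp.coeFn_nonneg] at hf ⊢
    filter_upwards [hf, Lp.coeFn_smul a f] with ω hfω hω
    rw [hω]
    exact mul_nonneg ha hfω

section OrderContinuity

theorem tendsto_eLpNorm_zero_of_dominated {X : Type*} [NormedAddCommGroup X] (hp₀ : p ≠ 0)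
    (hp : p ≠ ∞) {u : ℕ → Ω → X} {b : Ω → X} (hu : ∀ n, AEStronglyMeasurable (u n) μ)
    (hb : MemLp b p μ) (hub : ∀ n, ∀ᵐ ω ∂μ, ‖u n ω‖ ≤ ‖b ω‖)
    (hlim : ∀ᵐ ω ∂μ, Tendsto (fun n => u n ω) atTop (𝓝 0)) :
    Tendsto (fun n => eLpNorm (u n) p μ) atTop (𝓝 0) := by
  have hp_pos : 0 < p.toReal := ENNReal.toReal_pos hp₀ hp
  have hint : Tendsto (fun n => ∫⁻ ω, ‖u n ω‖ₑ ^ p.toReal ∂μ) atTop (𝓝 (∫⁻ _, 0 ∂μ)) := by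
    refine tendsto_lintegral_of_dominated_convergence' (fun ω => ‖b ω‖ₑ ^ p.toReal)
      (fun n => (hu n).enorm.pow_const _) (fun n => ?_)
      (lintegral_rpow_enorm_lt_top_of_eLpNorm_lt_top hp₀ hp hb.2).ne ?_
    · filter_upwards [hub n] with ω hω
      exact ENNReal.rpow_le_rpow (enorm_le_iff_norm_le.2 hω) hp_pos.le
    · filter_upwards [hlim] with ω hω
      simpa only [enorm_zero, ENNReal.zero_rpow_of_pos hp_pos] using
        hω.enorm.ennrpow_const p.toReal
  simpa only [eLpNorm_eq_lintegral_rpow_enorm_toReal hp₀ hp, lintegral_zero,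
    ENNReal.zero_rpow_of_pos (one_div_pos.2 hp_pos)] using hint.ennrpow_const (1 / p.toReal)

theorem exists_tendsto_Lp_of_dominated [Fact (1 ≤ p)] {X : Type*} [NormedAddCommGroup X]
    (hp : p ≠ ∞) {u : ℕ → Lp X p μ} {l b : Ω → X} (hb : MemLp b p μ)
    (hub : ∀ n, ∀ᵐ ω ∂μ, ‖u n ω - l ω‖ ≤ ‖b ω‖)
    (hlim : ∀ᵐ ω ∂μ, Tendsto (fun n => u n ω) atTop (𝓝 (l ω))) :
    ∃ f, Tendsto u atTop (𝓝 f) := by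
  have hl_meas : AEStronglyMeasurable l μ :=
    aestronglyMeasurable_of_tendsto_ae atTop (fun n => Lp.aestronglyMeasurable (u n)) hlim
  have hl : MemLp l p μ := by
    have hul : MemLp (⇑(u 0) - l) p μ :=
      hb.of_le ((Lp.aestronglyMeasurable (u 0)).sub hl_meas) (hub 0)
    exact (memLp_congr_ae (ae_of_all μ fun ω => sub_sub_cancel (u 0 ω) (l ω))).1
      ((Lp.memLp (u 0)).sub hul)
  refine ⟨hl.toLp l, Lp.tendsto_Lp_of_tendsto_eLpNorm l hl ?_⟩
  refine tendsto_eLpNorm_zero_of_dominated (zero_lt_one.trans_le Fact.out).ne' hp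
    (fun n => (Lp.aestronglyMeasurable (u n)).sub hl_meas) hb hub ?_
  filter_upwards [hlim] with ω hω
  simpa only [Pi.sub_apply, sub_self] using hω.sub_const (l ω)

theorem hasOrderContinuousNorm_Lp [Fact (1 ≤ p)] (hp : p ≠ ∞) :
    HasOrderContinuousNorm (Lp ℝ p μ) := by
  rintro u hu ⟨g, hg⟩
  have hmono : ∀ᵐ ω ∂μ, Monotone fun n => u n ω := by
    have hsucc : ∀ n, ∀ᵐ ω ∂μ, u n ω ≤ u (n + 1) ω := fun n =>
      (Lp.coeFn_le _ _).2 (hu n.le_succ)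
    filter_upwards [ae_all_iff.2 hsucc] with ω hω
    exact monotone_nat_of_le_succ hω
  have hle : ∀ᵐ ω ∂μ, ∀ n, u n ω ≤ g ω :=
    ae_all_iff.2 fun n => (Lp.coeFn_le _ _).2 (hg (Set.mem_range_self n))
  have hlim : ∀ᵐ ω ∂μ, Tendsto (fun n => u n ω) atTop (𝓝 (⨆ n, u n ω)) := by
    filter_upwards [hmono, hle] with ω hω hωg
    exact tendsto_atTop_ciSup hω ⟨g ω, Set.forall_mem_range.2 hωg⟩
  refine exists_tendsto_Lp_of_dominated hp ((Lp.memLp g).sub (Lp.memLp (u 0))) (fun n => ?_) hlim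
  filter_upwards [hmono, hle, hlim] with ω hω hωg hωl
  have hl : u n ω ≤ ⨆ n, u n ω := hω.ge_of_tendsto hωl n
  have hlg : ⨆ n, u n ω ≤ g ω := le_of_tendsto' hωl hωg
  have h₀ : u 0 ω ≤ u n ω := hω n.zero_le
  rw [norm_sub_rev, Real.norm_of_nonneg (sub_nonneg.2 hl), Pi.sub_apply,
    Real.norm_of_nonneg (sub_nonneg.2 (h₀.trans (hl.trans hlg)))]
  exact sub_le_sub hlg h₀

end OrderContinuity

section LocallyMeasurable

theorem LocallyMeasurable.comp {α β : Type*} [MeasurableSpace α] [MeasurableSpace β] {V : Ω → α}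
    (hV : LocallyMeasurable μ V) {φ : α → β} (hφ : Measurable φ) :
    LocallyMeasurable μ fun ω => φ (V ω) := fun s hs hμs => by
  obtain ⟨g, hg, hVg⟩ := hV s hs hμs
  exact ⟨fun ω => φ (g ω), hφ.comp hg, hVg.mono fun ω hω => congrArg φ hω⟩

theorem LocallyMeasurable.aemeasurable_restrict {α : Type*} [MeasurableSpace α] {V : Ω → α}
    (hV : LocallyMeasurable μ V) {s : Set Ω} (hs : MeasurableSet s) [SigmaFinite (μ.restrict s)] :
    AEMeasurable V (μ.restrict s) := by
  rw [← Measure.restrict_univ (μ := μ.restrict s), ← iUnion_spanningSets (μ.restrict s)]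
  refine aemeasurable_iUnion_iff.2 fun n => ?_
  have hsn := measurableSet_spanningSets (μ.restrict s) n
  have hfin := measure_spanningSets_lt_top (μ.restrict s) n
  rw [Measure.restrict_apply hsn] at hfin
  rw [Measure.restrict_restrict hsn]
  obtain ⟨g, hg, hVg⟩ := hV _ (hsn.inter hs) hfin
  exact ⟨g, hg, hVg⟩

theorem LocallyMeasurable.aestronglyMeasurable_mul (hp₀ : p ≠ 0) (hp : p ≠ ∞) {W : Ω → ℝ}
    (hW : LocallyMeasurable μ W) (f : Lp ℝ p μ) :
    AEStronglyMeasurable (fun ω => W ω * f ω) μ := by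
  obtain ⟨s, hs, hfs, hsσ⟩ := (Lp.finStronglyMeasurable f hp₀ hp).exists_set_sigmaFinite
  have hWs : AEMeasurable (s.indicator W) μ :=
    (aemeasurable_indicator_iff hs).2 (hW.aemeasurable_restrict hs)
  refine (hWs.aestronglyMeasurable.mul (Lp.aestronglyMeasurable f)).congr (ae_of_all _ fun ω => ?_)
  by_cases hω : ω ∈ s
  · simp only [Pi.mul_apply, Set.indicator_of_mem hω]
  · simp only [Pi.mul_apply, hfs ω hω, mul_zero]

theorem LocallyMeasurable.trunc {V : Ω → ℝ≥0∞} (hV : LocallyMeasurable μ V) (n : ℕ) :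
    LocallyMeasurable μ (trunc V n) :=
  hV.comp (measurable_id.min measurable_const).ennreal_toReal

end LocallyMeasurable

section MulOp

variable [Fact (1 ≤ p)] {W W₁ W₂ : Ω → ℝ} {K K₁ K₂ : Lp ℝ p μ →L[ℝ] Lp ℝ p μ} {c : ℝ}

/-- `K` is the operator on `L_p(μ)` of multiplication by the function `W`. -/
def IsMulOp (W : Ω → ℝ) (K : Lp ℝ p μ →L[ℝ] Lp ℝ p μ) : Prop :=
  ∀ f, K f =ᵐ[μ] fun ω => W ω * f ω

theorem exists_isMulOp (hp : p ≠ ∞) (hW : LocallyMeasurable μ W) (hWc : ∀ ω, ‖W ω‖ ≤ c) :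
    ∃ K : Lp ℝ p μ →L[ℝ] Lp ℝ p μ, IsMulOp W K := by
  have hbound : ∀ (f : Lp ℝ p μ) ω, ‖W ω * f ω‖ ≤ c * ‖f ω‖ := fun f ω =>
    (norm_mul _ _).trans_le (mul_le_mul_of_nonneg_right (hWc ω) (norm_nonneg _))
  have hmem : ∀ f : Lp ℝ p μ, MemLp (fun ω => W ω * f ω) p μ := fun f =>
    (Lp.memLp f).of_le_mul (hW.aestronglyMeasurable_mul (zero_lt_one.trans_le Fact.out).ne' hp f)
      (ae_of_all _ (hbound f))
  refine ⟨LinearMap.mkContinuous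
    { toFun := fun f => (hmem f).toLp
      map_add' := fun f g => ?_
      map_smul' := fun a f => ?_ } c fun f => ?_, fun f => (hmem f).coeFn_toLp⟩
  · rw [← MemLp.toLp_add]
    refine MemLp.toLp_congr _ _ ?_
    filter_upwards [Lp.coeFn_add f g] with ω hω
    simp only [hω, Pi.add_apply, mul_add]
  · rw [RingHom.id_apply, ← MemLp.toLp_const_smul]
    refine MemLp.toLp_congr _ _ ?_
    filter_upwards [Lp.coeFn_smul a f] with ω hω
    simp only [hω, Pi.smul_apply, smul_eq_mul, mul_left_comm]
  · refine Lp.norm_le_mul_norm_of_ae_le_mul ?_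
    filter_upwards [(hmem f).coeFn_toLp] with ω hω
    exact (congrArg norm hω).trans_le (hbound f ω)

theorem isMulOp_zero : IsMulOp (fun _ => 0) (0 : Lp ℝ p μ →L[ℝ] Lp ℝ p μ) := fun f => by
  filter_upwards [Lp.coeFn_zero ℝ p μ] with ω hω
  rw [zero_apply, hω, Pi.zero_apply, zero_mul]

theorem isMulOp_smul_id (c : ℝ) :
    IsMulOp (fun _ => c) (c • ContinuousLinearMap.id ℝ (Lp ℝ p μ)) := fun f => by
  filter_upwards [Lp.coeFn_smul c f] with ω hω
  rw [smul_apply, ContinuousLinearMap.id_apply, hω, Pi.smul_apply, smul_eq_mul]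

theorem IsMulOp.neg (hK : IsMulOp W K) : IsMulOp (fun ω => -W ω) (-K) := fun f => by
  filter_upwards [Lp.coeFn_neg (K f), hK f] with ω hneg hω
  rw [neg_apply, hneg, Pi.neg_apply, hω, neg_mul]

theorem IsMulOp.sub (h₁ : IsMulOp W₁ K₁) (h₂ : IsMulOp W₂ K₂) :
    IsMulOp (fun ω => W₁ ω - W₂ ω) (K₁ - K₂) := fun f => by
  filter_upwards [Lp.coeFn_sub (K₁ f) (K₂ f), h₁ f, h₂ f] with ω hsub hω₁ hω₂
  rw [sub_apply, hsub, Pi.sub_apply, hω₁, hω₂, sub_mul]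

theorem IsMulOp.opLE (h₁ : IsMulOp W₁ K₁) (h₂ : IsMulOp W₂ K₂) (hW : ∀ ω, W₁ ω ≤ W₂ ω) :
    K₁ ≼ K₂ := fun f hf => by
  rw [← Lp.coeFn_nonneg] at hf
  rw [← Lp.coeFn_le]
  filter_upwards [hf, h₁ f, h₂ f] with ω hfω hω₁ hω₂
  rw [hω₁, hω₂]
  exact mul_le_mul_of_nonneg_right (hW ω) hfω

theorem IsMulOp.ae_eq_sub_iff (hK : IsMulOp W K) {f g g₀ : Lp ℝ p μ} :
    (⇑g =ᵐ[μ] fun ω => g₀ ω - W ω * f ω) ↔ g = g₀ - K f := by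
  have hsub : ⇑(g₀ - K f) =ᵐ[μ] fun ω => g₀ ω - W ω * f ω := by
    filter_upwards [Lp.coeFn_sub g₀ (K f), hK f] with ω hω hKω
    rw [hω, Pi.sub_apply, hKω]
  exact ⟨fun h => Lp.ext (h.trans hsub.symm), fun h => h ▸ hsub⟩

theorem IsMulOp.isPerturbedSG_iff (hK : IsMulOp W K) {T S : ℝ → Lp ℝ p μ →L[ℝ] Lp ℝ p μ} :
    IsPerturbedSG μ p T S W ↔ IsBoundedPerturbation T S (-K) := by
  simp only [IsPerturbedSG, IsBoundedPerturbation, hK.ae_eq_sub_iff, eq_sub_iff_add_eq,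
    neg_apply, sub_neg_eq_add, exists_eq_right']

theorem IsMulOp.isPerturbedSGSub_iff (hK : IsMulOp W K) {F : Submodule ℝ (Lp ℝ p μ)}
    {R U : ℝ → F →L[ℝ] F} {C : F →L[ℝ] F} (hC : ∀ f : F, (C f : Lp ℝ p μ) = -K f) :
    IsPerturbedSGSub μ p F R U W ↔ IsBoundedPerturbation R U C := by
  have hg : ∀ f g g₀ : F, (g : Lp ℝ p μ) = g₀ - K f ↔ g - C f = g₀ := fun f g g₀ => by
    rw [← Subtype.coe_inj (a := g - C f), Submodule.coe_sub, hC, sub_neg_eq_add, eq_sub_iff_add_eq]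
  simp only [IsPerturbedSGSub, IsBoundedPerturbation, hK.ae_eq_sub_iff, hg, exists_eq_right']

end MulOp

section AbsorptionRate

variable [Fact (1 ≤ p)] {T : ℝ → Lp ℝ p μ →L[ℝ] Lp ℝ p μ} {V : Ω → ℝ≥0∞}

theorem LocallyMeasurable.exists_isMulOp_trunc (hV : LocallyMeasurable μ V) (hp : p ≠ ∞) (n : ℕ) :
    ∃ K : Lp ℝ p μ →L[ℝ] Lp ℝ p μ, IsMulOp (Absorption.trunc V n) K :=
  exists_isMulOp hp (hV.trunc n) fun ω =>
    (Real.norm_of_nonneg (trunc_nonneg V n ω)).trans_le (trunc_le V n ω)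

theorem IsPerturbedSG.opLE_of_trunc_sub (hp : p ≠ ∞) (hT : IsC0Semigroup T)
    (hTpos : IsPositiveSG T) (hV : LocallyMeasurable μ V) {m n : ℕ} (hnm : n ≤ m)
    {D : ℝ → Lp ℝ p μ →L[ℝ] Lp ℝ p μ}
    (hD : IsPerturbedSG μ p T D fun ω => trunc V m ω - trunc V n ω) {t : ℝ} (ht : 0 ≤ t) :
    D t ≼ T t := by
  choose B hB using hV.exists_isMulOp_trunc hp
  have hpert : IsBoundedPerturbation T D (B n - B m) := by
    simpa only [neg_sub] using ((hB m).sub (hB n)).isPerturbedSG_iff.1 hD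
  exact (hpert.nonneg_and_opLE hT hTpos (isMulOp_zero.opLE (hB n) (trunc_nonneg V n))
    ((hB n).opLE (hB m) (trunc_mono V hnm)) ((hB m).opLE (isMulOp_smul_id m) (trunc_le V m)) ht).2

theorem exists_isPerturbedSGSub_neg_trunc (hp : p ≠ ∞) (hT : IsC0Semigroup T)
    (hTpos : IsPositiveSG T) (hV : LocallyMeasurable μ V)
    {S : ℕ → ℝ → Lp ℝ p μ →L[ℝ] Lp ℝ p μ} (hS : ∀ n, IsPerturbedSG μ p T (S n) (trunc V n))
    {F : Submodule ℝ (Lp ℝ p μ)} (hF : LatticeOrderedAddCommGroup.IsSolid (F : Set (Lp ℝ p μ)))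
    (hFc : IsClosed (F : Set (Lp ℝ p μ))) {R : ℝ → F →L[ℝ] F} (hR : IsC0Semigroup R)
    (hSR : ∀ t, 0 ≤ t → ∀ f : F,
      Tendsto (fun n => S n t (f : Lp ℝ p μ)) atTop (𝓝 (R t f : Lp ℝ p μ))) :
    ∃ U : ℕ → ℝ → F →L[ℝ] F,
      (∀ n, IsPerturbedSGSub μ p F R (U n) fun ω => -trunc V n ω) ∧
      ∃ L : ℝ → F →L[ℝ] F,
        (∀ t, 0 ≤ t → ∀ f, Tendsto (fun n => U n t f) atTop (𝓝 (L t f))) ∧ IsC0Semigroup L := by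
  choose B hB using hV.exists_isMulOp_trunc hp
  have hB0 : ∀ n, 0 ≼ B n := fun n => isMulOp_zero.opLE (hB n) (trunc_nonneg V n)
  have hBn : ∀ n : ℕ, B n ≼ (n : ℝ) • ContinuousLinearMap.id ℝ _ := fun n =>
    (hB n).opLE (isMulOp_smul_id n) (trunc_le V n)
  have hBmono : ∀ n m, n ≤ m → B n ≼ B m := fun n m hnm =>
    (hB n).opLE (hB m) (trunc_mono V hnm)
  have : CompleteSpace F := hFc.completeSpace_coe
  let C : ℕ → F →L[ℝ] F := fun n => (B n).restrict (mapsTo_of_isSolid hF (hB0 n) (hBn n))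
  choose U hU using fun n => hR.exists_isBoundedPerturbation (C n)
  exact ⟨U, fun n => ((hB n).neg.isPerturbedSGSub_iff fun f => (neg_neg (B n f)).symm).2 (hU n),
    hT.exists_tendsto_of_restrict_absorption (hasOrderContinuousNorm_Lp hp) hTpos hB0 hBn hBmono
      (fun n => (hB n).isPerturbedSG_iff.1 (hS n)) hF hFc hR hSR (fun _ _ => rfl) hU⟩

end AbsorptionRate

end Lp

end Positivity

end Absorption

theorem statement11_general
    {Ω : Type*} [MeasurableSpace Ω] (μ : Measure Ω) (p : ℝ≥0∞) [Fact (1 ≤ p)] (hp : p ≠ ∞)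
    (T : ℝ → Lp ℝ p μ →L[ℝ] Lp ℝ p μ) (hT : IsC0Semigroup T) (hTpos : IsPositiveSG T)
    (V : Ω → ℝ≥0∞) (hVmeas : LocallyMeasurable μ V)
    (S : ℕ → ℝ → Lp ℝ p μ →L[ℝ] Lp ℝ p μ)
    (hS : ∀ n : ℕ, IsPerturbedSG μ p T (S n) (trunc V n))
    (F : Submodule ℝ (Lp ℝ p μ)) (hF : LatticeOrderedAddCommGroup.IsSolid (F : Set (Lp ℝ p μ)))
    (hFc : IsClosed (F : Set (Lp ℝ p μ)))
    (TVr : ℝ → F →L[ℝ] F) (hTVrC0 : IsC0Semigroup TVr)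
    (hTVr : ∀ t : ℝ, 0 ≤ t → ∀ f : F,
      Tendsto (fun n : ℕ => S n t (f : Lp ℝ p μ)) atTop (𝓝 (TVr t f : Lp ℝ p μ))) :
    (∀ m n : ℕ, n ≤ m →
      ∀ D : ℝ → Lp ℝ p μ →L[ℝ] Lp ℝ p μ,
        IsPerturbedSG μ p T D (fun ω => trunc V m ω - trunc V n ω) →
        ∀ t : ℝ, 0 ≤ t → ∀ f : Lp ℝ p μ, 0 ≤ f → D t f ≤ T t f) ∧
    (∃ U : ℕ → ℝ → F →L[ℝ] F,
      (∀ n : ℕ, IsPerturbedSGSub μ p F TVr (U n) (fun ω => -(trunc V n ω))) ∧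
      ∃ L : ℝ → F →L[ℝ] F,
        (∀ t : ℝ, 0 ≤ t → ∀ f : F, Tendsto (fun n : ℕ => U n t f) atTop (𝓝 (L t f))) ∧
        IsC0Semigroup L) :=
  ⟨fun _ _ hnm _ hD _ ht => hD.opLE_of_trunc_sub hp hT hTpos hVmeas hnm ht,
    exists_isPerturbedSGSub_neg_trunc hp hT hTpos hVmeas hS hF hFc hTVrC0 hTVr⟩

/-- For locally measurable `V : Ω → [0,∞]`, with `P = s-lim_{t→0+} T_V(t)`
a band projection with range the band `F` (identified with `L_p(μ₁)` for a decomposition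
`μ = μ₁ + μ₂`, `μ₁ ⊥ μ₂`), the rate `−V` is admissible for the restricted `C₀`-semigroup
`T_V|_F`; this relies on the domination `T_{V∧m − V∧n}(t) ≤ T(t)` for all `m ≥ n ≥ 0`. -/
theorem statement11
    {Ω : Type*} [MeasurableSpace Ω] (μ : Measure Ω) (p : ℝ≥0∞) [Fact (1 ≤ p)] (hp : p ≠ ∞)
    (T : ℝ → Lp ℝ p μ →L[ℝ] Lp ℝ p μ)
    (hT : IsC0Semigroup T) (hTpos : IsPositiveSG T)
    (V : Ω → ℝ≥0∞) (hVmeas : LocallyMeasurable μ V)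
    -- the one-parameter semigroup `T_V = s-lim_{n→∞} e^{t(A − V∧n)}`
    (S : ℕ → ℝ → Lp ℝ p μ →L[ℝ] Lp ℝ p μ)
    (hS : ∀ n : ℕ, IsPerturbedSG μ p T (S n) (trunc V n))
    (TV : ℝ → Lp ℝ p μ →L[ℝ] Lp ℝ p μ)
    (hTV : ∀ t : ℝ, 0 ≤ t → ∀ f : Lp ℝ p μ,
      Tendsto (fun n : ℕ => S n t f) atTop (𝓝 (TV t f)))
    -- the band projection `P = s-lim_{t→0+} T_V(t)`
    (P : Lp ℝ p μ →L[ℝ] Lp ℝ p μ)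
    (hP : ∀ f : Lp ℝ p μ, Tendsto (fun t : ℝ => TV t f) (𝓝[>] (0 : ℝ)) (𝓝 (P f)))
    (hPband : IsBandProjection P)
    -- the band `F = R(P)` (i.e. `L_p(μ₁)`), and the restriction of `T_V` to `F`,
    -- which is a `C₀`-semigroup
    (F : Submodule ℝ (Lp ℝ p μ)) (hF : (F : Set (Lp ℝ p μ)) = Set.range P)
    (TVr : ℝ → F →L[ℝ] F)
    (hTVr : ∀ t : ℝ, 0 ≤ t → ∀ f : F, ((TVr t f : F) : Lp ℝ p μ) = TV t (f : Lp ℝ p μ))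
    (hTVrC0 : IsC0Semigroup TVr) :
    -- the domination `T_{V∧m − V∧n}(t) ≤ T(t)` for `m ≥ n ≥ 0` …
    (∀ m n : ℕ, n ≤ m →
      ∀ D : ℝ → Lp ℝ p μ →L[ℝ] Lp ℝ p μ,
        IsPerturbedSG μ p T D (fun ω => trunc V m ω - trunc V n ω) →
        ∀ t : ℝ, 0 ≤ t → ∀ f : Lp ℝ p μ, 0 ≤ f → D t f ≤ T t f) ∧
    -- … and `−V` is admissible for `T_V|_F`
    (∃ U : ℕ → ℝ → F →L[ℝ] F,
      (∀ n : ℕ, IsPerturbedSGSub μ p F TVr (U n) (fun ω => -(trunc V n ω))) ∧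
      ∃ L : ℝ → F →L[ℝ] F,
        (∀ t : ℝ, 0 ≤ t → ∀ f : F, Tendsto (fun n : ℕ => U n t f) atTop (𝓝 (L t f))) ∧
        IsC0Semigroup L) :=
  statement11_general μ p hp T hT hTpos V hVmeas S hS F
    (hF ▸ isSolid_range_of_comp_self hPband.1 (fun f hf => (hPband.2 f hf).1)
      fun f hf => (hPband.2 f hf).2)
    (hF ▸ isClosed_range_of_comp_self hPband.1) TVr hTVrC0
    fun t ht f => (hTVr t ht f).symm ▸ hTV t ht f
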